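/- arXiv:2505.14198 — 2 statements merged into one kernel-verified Lean document; each statement's English description precedes it below -/
import Mathlib

section
/- Let A be a q×q complex matrix, let w₀ > 0 and b > 0, set w_k := w₀ + kb, and set F_{i,j} := ∏_{k=i}^{j−1}(I + w_k⁻¹A). Then for every eigenvalue λ of A there is a constant C (depending on A, λ, b, w₀ but not on i, j) such that for all integers 1 ≤ i ≤ j: ‖P_λ F_{i,j}‖ ≤ C (j/i)^{Re λ / b} (1 + log(j/i))^{ν_λ}. -/
open MeasureTheory Matrix Filter

/-- The operator norm of a complex q×q matrix, with respect to the Euclidean norm. -/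
noncomputable def opNorm {q : ℕ} (M : Matrix (Fin q) (Fin q) ℂ) : ℝ :=
  ‖Matrix.toEuclideanCLM (𝕜 := ℂ) M‖

/-- The matrix products F_{i,j} := ∏_{k=i}^{j−1} (I + w_k⁻¹ A) (empty product = I).
The factors commute, so the order of multiplication is immaterial; here the factors
are multiplied with increasing k from left to right. -/
noncomputable def prodF {q : ℕ} (A : Matrix (Fin q) (Fin q) ℂ) (w : ℕ → ℝ) (i j : ℕ) :
    Matrix (Fin q) (Fin q) ℂ :=
  ((List.range' i (j - i)).map fun k => (1 : Matrix (Fin q) (Fin q) ℂ) + (w k)⁻¹ • A).prod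

/-- `P` is the spectral projection of `A` for the eigenvalue `lam`: it is the identity
on the generalized eigenspace E_lam = ker((A − lam I)^q) and vanishes on the generalized
eigenspace E_mu = ker((A − mu I)^q) of every other eigenvalue `mu`. Since ℂ^q is the
direct sum of the generalized eigenspaces, these conditions determine `P` uniquely. -/
def IsSpectralProj {q : ℕ} (A : Matrix (Fin q) (Fin q) ℂ) (lam : ℂ)
    (P : Matrix (Fin q) (Fin q) ℂ) : Prop :=
  (∀ v : Fin q → ℂ, ((A - lam • 1) ^ q).mulVec v = 0 → P.mulVec v = v) ∧
  ∀ mu : ℂ, mu ≠ lam → ∀ v : Fin q → ℂ, ((A - mu • 1) ^ q).mulVec v = 0 → P.mulVec v = 0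

/-- `ν` is the nilpotency index ν_lam of N_lam := (A − lam I) P_lam, i.e. the unique
integer ν ≥ 0 with N_lam^(ν+1) = 0 and (ν = 0 or N_lam^ν ≠ 0). -/
def NilIndexOf {q : ℕ} (A : Matrix (Fin q) (Fin q) ℂ) (lam : ℂ)
    (P : Matrix (Fin q) (Fin q) ℂ) (ν : ℕ) : Prop :=
  ((A - lam • 1) * P) ^ (ν + 1) = 0 ∧ (ν = 0 ∨ ((A - lam • 1) * P) ^ ν ≠ 0)


open NormedSpace in
theorem aux_g {𝔸 : Type*} [NormedRing 𝔸] [NormedAlgebra ℂ 𝔸] [CompleteSpace 𝔸] (x : 𝔸) (t0 : ℝ) :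
    ∃ K : ℝ, 0 ≤ K ∧ ∀ t : ℝ, 0 ≤ t → t ≤ t0 →
      ‖exp (t • (-x)) * (1 + t • x) - 1‖ ≤ K * t ^ 2 := by
  let _ : NormedAlgebra ℚ 𝔸 := NormedAlgebra.restrictScalars ℚ ℂ 𝔸
  have hc : Continuous (fun t : ℝ => exp (t • (-x)) * (-(x * x))) := by
    have := exp_continuous (𝔸 := 𝔸)
    fun_prop
  obtain ⟨K, hK⟩ := (isCompact_Icc (a := (0:ℝ)) (b := t0)).exists_bound_of_continuousOn
    hc.continuousOn
  refine ⟨max K 0, le_max_right _ _, fun t ht0 ht => ?_⟩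
  have hd : ∀ u : ℝ, HasDerivAt (fun t : ℝ => exp (t • (-x)) * (1 + t • x))
      (u • (exp (u • (-x)) * (-(x * x)))) u := by
    intro u
    have h1 := hasDerivAt_exp_smul_const (𝕂 := ℝ) (-x) u
    have h2 : HasDerivAt (fun t : ℝ => (1 : 𝔸) + t • x) x u := by
      simpa using ((hasDerivAt_id u).smul_const x).const_add (1 : 𝔸)
    have h3 := h1.mul h2
    refine h3.congr_deriv ?_
    simp only [mul_add, mul_neg, neg_mul, mul_one, smul_neg, mul_smul_comm, smul_mul_assoc, mul_assoc]
    abel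
  have := norm_image_sub_le_of_norm_deriv_le_segment' (a := 0) (b := t) (C := max K 0 * t)
    (fun u _ => (hd u).hasDerivWithinAt) (by
      intro u hu
      rw [norm_smul, Real.norm_eq_abs, abs_of_nonneg hu.1, mul_comm]
      have h1 := hK u ⟨hu.1, hu.2.le.trans ht⟩
      have h2 := le_max_left K 0
      have h3 := le_max_right K 0
      have := norm_nonneg (exp (u • (-x)) * (-(x * x)))
      exact mul_le_mul (h1.trans h2) hu.2.le hu.1 h3) t ⟨ht0, le_rfl⟩
  simp only [zero_smul, exp_zero, add_zero, mul_one, sub_zero] at this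
  calc _ ≤ _ := this
    _ = _ := by ring

open NormedSpace in
theorem aux_prod {𝔸 : Type*} [NormedRing 𝔸] [NormedAlgebra ℂ 𝔸] [CompleteSpace 𝔸] (x : 𝔸)
    (K : ℝ) (t : ℕ → ℝ)
    (h : ∀ k, ‖exp (t k • (-x)) * (1 + t k • x) - 1‖ ≤ K * (t k) ^ 2) (i n : ℕ) :
    ‖exp ((∑ k ∈ Finset.range n, t (i + k)) • (-x)) *
      ((List.range' i n).map fun k => 1 + t k • x).prod‖ ≤
      ‖(1:𝔸)‖ * Real.exp (K * ∑ k ∈ Finset.range n, (t (i + k)) ^ 2) := by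
  let _ : NormedAlgebra ℚ 𝔸 := NormedAlgebra.restrictScalars ℚ ℂ 𝔸
  induction n with
  | zero => simp
  | succ n ih =>
    rw [List.range'_concat, List.map_append, List.prod_append, Finset.sum_range_succ,
      Finset.sum_range_succ]
    simp only [one_mul, List.map_cons, List.map_nil, List.prod_cons, List.prod_nil, mul_one]
    set s := ∑ k ∈ Finset.range n, t (i + k)
    set F := ((List.range' i n).map fun k => 1 + t k • x).prod with hF
    set u := t (i + n) with hu
    have hcF : Commute x F := by
      apply Commute.list_prod_right
      intro y hy
      obtain ⟨k, _, rfl⟩ := List.mem_map.1 hy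
      exact (Commute.one_right x).add_right ((Commute.refl x).smul_right _)
    have hcE : Commute (exp (u • (-x))) F := ((hcF.neg_left).smul_left u).exp_left
    have hadd : exp ((s + u) • (-x)) = exp (s • (-x)) * exp (u • (-x)) := by
      rw [add_smul, NormedSpace.exp_add_of_commute]
      exact ((Commute.refl (-x)).smul_left _).smul_right _
    have e : exp ((s + u) • (-x)) * (F * (1 + u • x)) =
        (exp (s • (-x)) * F) + (exp (s • (-x)) * F) * (exp (u • (-x)) * (1 + u • x) - 1) := by
      rw [hadd, mul_sub, mul_one, add_sub_cancel]
      simp only [mul_assoc]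
      rw [← mul_assoc F, ← hcE.eq, mul_assoc]
    rw [e]
    have h1 := h (i + n)
    rw [← hu] at h1
    set Q := exp (s • (-x)) * F
    set R := exp (u • (-x)) * (1 + u • x) - 1
    calc ‖Q + Q * R‖ ≤ ‖Q‖ + ‖Q‖ * ‖R‖ := (norm_add_le _ _).trans (by gcongr; exact norm_mul_le _ _)
      _ = ‖Q‖ * (‖R‖ + 1) := by ring
      _ ≤ (‖(1:𝔸)‖ * Real.exp (K * ∑ k ∈ Finset.range n, (t (i + k)) ^ 2)) * Real.exp (K * u ^ 2) := by
          gcongr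
          exact (add_le_add_left h1 1).trans (Real.add_one_le_exp _)
      _ = _ := by rw [mul_assoc, ← Real.exp_add, mul_add]

open NormedSpace in
theorem aux_P {𝔸 : Type*} [NormedRing 𝔸] [NormedAlgebra ℂ 𝔸] [CompleteSpace 𝔸] (x p : 𝔸) (lam : ℂ)
    (ν : ℕ) (hp : ∀ m, ν < m → p * (x - lam • 1) ^ m = 0) :
    ∃ K : ℝ, 0 ≤ K ∧ ∀ s : ℝ, 0 ≤ s → ‖p * exp (s • x)‖ ≤ K * Real.exp (lam.re * s) * (1 + s) ^ ν := by
  let _ : NormedAlgebra ℚ 𝔸 := NormedAlgebra.restrictScalars ℚ ℂ 𝔸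
  refine ⟨∑ m ∈ Finset.range (ν + 1), ‖p * (x - lam • 1) ^ m‖, by positivity, fun s hs => ?_⟩
  have e1 : s • x = algebraMap ℂ 𝔸 (s * lam) + (s:ℂ) • (x - lam • 1) := by
    rw [Algebra.algebraMap_eq_smul_one, smul_sub, smul_smul, add_sub_cancel]
    rfl
  have e2 : exp (s • x) = Complex.exp (s * lam) • exp ((s:ℂ) • (x - lam • 1)) := by
    rw [e1, NormedSpace.exp_add_of_commute (Algebra.commutes _ _), ← algebraMap_exp_comm,
      ← Complex.exp_eq_exp_ℂ, ← Algebra.smul_def]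
  have hs1 := (exp_series_hasSum_exp' (𝕂 := ℂ) ((s:ℂ) • (x - lam • 1))).mul_left p
  have hs2 : p * exp ((s:ℂ) • (x - lam • 1)) = ∑ m ∈ Finset.range (ν + 1),
      p * ((m.factorial : ℂ)⁻¹ • ((s:ℂ) • (x - lam • 1)) ^ m) := by
    refine hs1.unique (hasSum_sum_of_ne_finset_zero ?_)
    intro m hm
    rw [Finset.mem_range, not_lt] at hm
    rw [smul_pow, mul_smul_comm, mul_smul_comm, hp m hm]
    simp
  rw [e2, mul_smul_comm, norm_smul, hs2, Complex.norm_exp]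
  have : ((s:ℂ) * lam).re = lam.re * s := by simp [mul_comm]
  rw [this]
  calc _ ≤ Real.exp (lam.re * s) * ∑ m ∈ Finset.range (ν + 1), ‖p * (x - lam • 1) ^ m‖ * (1 + s) ^ ν := by
        gcongr
        refine (norm_sum_le _ _).trans (Finset.sum_le_sum fun m hm => ?_)
        rw [smul_pow, mul_smul_comm, mul_smul_comm, norm_smul, norm_smul, ← mul_assoc, mul_comm]
        gcongr
        rw [norm_pow, norm_inv, Complex.norm_natCast, Complex.norm_real, Real.norm_eq_abs,
          abs_of_nonneg hs]
        have h1 : ((m.factorial : ℝ))⁻¹ ≤ 1 := by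
          apply inv_le_one_of_one_le₀
          exact_mod_cast Nat.succ_le_of_lt (Nat.factorial_pos m)
        have h2 : s ^ m ≤ (1 + s) ^ ν :=
          (pow_le_pow_left₀ hs (by linarith) m).trans
            (pow_le_pow_right₀ (by linarith) (by simpa [Nat.lt_succ_iff] using hm))
        calc _ ≤ 1 * s ^ m := by gcongr
          _ ≤ _ := by simpa using h2
    _ = _ := by rw [← Finset.sum_mul]; ring

open NormedSpace in
theorem aux_comb {𝔸 : Type*} [NormedRing 𝔸] [NormedAlgebra ℂ 𝔸] [CompleteSpace 𝔸] (x p : 𝔸)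
    (lam : ℂ) (ν : ℕ) (hp : ∀ m, ν < m → p * (x - lam • 1) ^ m = 0) (t0 : ℝ) :
    ∃ K₁ K₂ : ℝ, 0 ≤ K₁ ∧ 0 ≤ K₂ ∧ ∀ t : ℕ → ℝ, (∀ k, 0 ≤ t k) → (∀ k, t k ≤ t0) → ∀ i n : ℕ,
      ‖p * ((List.range' i n).map fun k => 1 + (t k : ℂ) • x).prod‖ ≤
        K₂ * Real.exp (lam.re * ∑ k ∈ Finset.range n, t (i + k)) *
          (1 + ∑ k ∈ Finset.range n, t (i + k)) ^ ν *
          Real.exp (K₁ * ∑ k ∈ Finset.range n, (t (i + k)) ^ 2) := by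
  let _ : NormedAlgebra ℚ 𝔸 := NormedAlgebra.restrictScalars ℚ ℂ 𝔸
  obtain ⟨K₁, hK₁, hg⟩ := aux_g x t0
  obtain ⟨K₂, hK₂, hp⟩ := aux_P x p lam ν hp
  refine ⟨K₁, K₂ * ‖(1 : 𝔸)‖, hK₁, by positivity, fun t ht0 ht i n => ?_⟩
  have hpr := aux_prod x K₁ t (fun k => hg (t k) (ht0 k) (ht k)) i n
  change ‖p * ((List.range' i n).map fun k => 1 + t k • x).prod‖ ≤ _
  set s : ℝ := ∑ k ∈ Finset.range n, t (i + k) with hs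
  have hs0 : 0 ≤ s := Finset.sum_nonneg fun k _ => ht0 _
  set F := ((List.range' i n).map fun k => 1 + t k • x).prod with hFF
  have hfac : p * F = (p * exp (s • x)) * (exp (s • (-x)) * F) := by
    have : exp (s • x) * exp (s • (-x)) = 1 := by
      rw [← NormedSpace.exp_add_of_commute, smul_neg, add_neg_cancel, exp_zero]
      exact ((Commute.refl x).neg_right.smul_left _).smul_right _
    rw [mul_assoc, ← mul_assoc (exp (s • x)), this, one_mul]
  rw [hfac]
  calc _ ≤ ‖p * exp (s • x)‖ * ‖exp (s • (-x)) * F‖ := norm_mul_le _ _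
    _ ≤ _ := mul_le_mul (hp s hs0) hpr (norm_nonneg _) (by positivity)
    _ = _ := by ring

theorem aux_spec {q : ℕ} (A P : Matrix (Fin q) (Fin q) ℂ) (lam : ℂ) (hP : IsSpectralProj A lam P) :
    P * P = P ∧ Commute P A := by
  have key : ∀ M : Matrix (Fin q) (Fin q) ℂ,
      (∀ mu : ℂ, ∀ v : Fin q → ℂ, ((A - mu • 1) ^ q).mulVec v = 0 → M.mulVec v = 0) → M = 0 := by
    intro M hM
    have : ∀ v, M.mulVec v = 0 := by
      intro v
      have hv : v ∈ ⨆ μ : ℂ, Module.End.maxGenEigenspace (Matrix.toLin' A) μ := by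
        rw [Module.End.iSup_maxGenEigenspace_eq_top]; trivial
      refine Submodule.iSup_induction _ (motive := fun v => M.mulVec v = 0) hv ?_ ?_ ?_
      · intro μ v hv
        rw [Module.End.maxGenEigenspace_eq_genEigenspace_finrank, Module.End.mem_genEigenspace_nat] at hv
        apply hM μ
        rw [LinearMap.mem_ker] at hv
        have e : Matrix.toLin' A - μ • 1 = Matrix.toLin' (A - μ • 1) := by
          rw [map_sub, map_smul, Matrix.toLin'_one]; rfl
        rw [e, ← Matrix.toLin'_pow, Matrix.toLin'_apply] at hv
        simpa using hv
      · simp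
      · intro v w h1 h2
        rw [Matrix.mulVec_add, h1, h2, add_zero]
    apply Matrix.toLin'.injective
    apply LinearMap.ext
    intro v
    simp [this]
  have inv : ∀ mu : ℂ, ∀ v : Fin q → ℂ, ((A - mu • 1) ^ q).mulVec v = 0 →
      ((A - mu • 1) ^ q).mulVec (A.mulVec v) = 0 := by
    intro mu v hv
    have hc : Commute ((A - mu • 1) ^ q) A := by
      apply Commute.pow_left
      exact (Commute.refl A).sub_left ((Commute.one_left A).smul_left mu)
    rw [Matrix.mulVec_mulVec, hc.eq, ← Matrix.mulVec_mulVec, hv, Matrix.mulVec_zero]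
  constructor
  · rw [← sub_eq_zero]
    apply key
    intro mu v hv
    rw [Matrix.sub_mulVec, ← Matrix.mulVec_mulVec]
    by_cases h : mu = lam
    · subst h; rw [hP.1 v hv, hP.1 v hv, sub_self]
    · rw [hP.2 mu h v hv]; simp
  · rw [Commute, SemiconjBy, ← sub_eq_zero]
    apply key
    intro mu v hv
    rw [Matrix.sub_mulVec, ← Matrix.mulVec_mulVec, ← Matrix.mulVec_mulVec]
    by_cases h : mu = lam
    · subst h; rw [hP.1 v hv, hP.1 _ (inv _ v hv), sub_self]
    · rw [hP.2 mu h v hv, hP.2 mu h _ (inv _ v hv)]; simp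

theorem aux_sum (w₀ b : ℝ) (hw₀ : 0 < w₀) (hb : 0 < b) (i n : ℕ) (hi : 1 ≤ i) :
    |∑ k ∈ Finset.range n, (w₀ + ((i + k : ℕ) : ℝ) * b)⁻¹ -
      Real.log (((i + n : ℕ) : ℝ) / i) / b| ≤
      (w₀ / b ^ 2 + 1 / b) * ∑ k ∈ Finset.range n, (1 / ((i + k : ℕ) : ℝ) ^ 2) := by
  have hi0 : (0:ℝ) < i := by exact_mod_cast hi
  induction n with
  | zero => simp [hi0.ne']
  | succ n ih =>
    rw [Finset.sum_range_succ, Finset.sum_range_succ, mul_add]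
    set x : ℝ := ((i + n : ℕ) : ℝ) with hx
    have hx1 : 1 ≤ x := by rw [hx]; exact_mod_cast (by omega : 1 ≤ i + n)
    have hx0 : 0 < x := by linarith
    have hx' : ((i + (n + 1) : ℕ) : ℝ) = x + 1 := by rw [hx]; push_cast; ring
    rw [hx']
    have hl : Real.log ((x + 1) / i) = Real.log (x / i) + Real.log ((x + 1) / x) := by
      rw [← Real.log_mul (by positivity) (by positivity)]
      congr 1
      field_simp
    have hu : Real.log ((x + 1) / x) ≤ 1 / x := by
      have := Real.log_le_sub_one_of_pos (x := (x + 1) / x) (by positivity)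
      have e : (x + 1) / x - 1 = 1 / x := by field_simp; ring
      linarith
    have hlo : 1 / x - 1 / x ^ 2 ≤ Real.log ((x + 1) / x) := by
      have h1 := Real.one_sub_inv_le_log_of_pos (x := (x + 1) / x) (by positivity)
      have h2 : 1 / x - 1 / x ^ 2 ≤ 1 - ((x + 1) / x)⁻¹ := by
        rw [inv_div]
        have e : 1 - x / (x + 1) - (1 / x - 1 / x ^ 2) = 1 / (x ^ 2 * (x + 1)) := by
          field_simp; ring
        have : 0 < 1 / (x ^ 2 * (x + 1)) := by positivity
        linarith
      linarith
    have hwu : (w₀ + x * b)⁻¹ ≤ 1 / x / b := by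
      rw [div_div, one_div]
      apply inv_anti₀ (by positivity); linarith
    have hwl : 1 / x / b - w₀ / b ^ 2 * (1 / x ^ 2) ≤ (w₀ + x * b)⁻¹ := by
      have e : (w₀ + x * b)⁻¹ - (1 / x / b - w₀ / b ^ 2 * (1 / x ^ 2)) =
        w₀ ^ 2 / (b ^ 2 * x ^ 2 * (w₀ + x * b)) := by
          field_simp; ring
      have : 0 < w₀ ^ 2 / (b ^ 2 * x ^ 2 * (w₀ + x * b)) := by positivity
      linarith
    have hu' : Real.log ((x + 1) / x) / b ≤ 1 / x / b := by gcongr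
    have hlo' : 1 / x / b - 1 / b * (1 / x ^ 2) ≤ Real.log ((x + 1) / x) / b := by
      calc _ = (1 / x - 1 / x ^ 2) / b := by ring
        _ ≤ _ := by gcongr
    have p1 : 0 ≤ w₀ / b ^ 2 * (1 / x ^ 2) := by positivity
    have p2 : 0 ≤ 1 / b * (1 / x ^ 2) := by positivity
    rw [hl, add_div]
    rw [abs_le] at ih ⊢
    constructor <;> nlinarith [ih.1, ih.2]

theorem aux_sq (i n : ℕ) : ∑ k ∈ Finset.range n, (1 / ((i + k : ℕ) : ℝ) ^ 2) ≤
    ∑' k : ℕ, (1 / (k : ℝ) ^ 2) := by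
  have hs : Summable (fun k : ℕ => 1 / (k : ℝ) ^ 2) := Real.summable_one_div_nat_pow.2 (by norm_num)
  have e := Finset.sum_map (Finset.range n) (addLeftEmbedding i) (fun k : ℕ => 1 / (k : ℝ) ^ 2)
  simp only [addLeftEmbedding_apply] at e
  rw [← e]
  exact hs.sum_le_tsum _ (fun k _ => by positivity)

theorem opNorm_spectralProj_prodF_le (q : ℕ) (A : Matrix (Fin q) (Fin q) ℂ)
    (w₀ b : ℝ) (hw₀ : 0 < w₀) (hb : 0 < b)
    (lam : ℂ) (hlam : lam ∈ spectrum ℂ A)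
    (P : Matrix (Fin q) (Fin q) ℂ) (hP : IsSpectralProj A lam P)
    (ν : ℕ) (hν : NilIndexOf A lam P ν) :
    ∃ C : ℝ, ∀ i j : ℕ, 1 ≤ i → i ≤ j →
      opNorm (P * prodF A (fun k => w₀ + (k : ℝ) * b) i j)
        ≤ C * ((j : ℝ) / (i : ℝ)) ^ (lam.re / b) * (1 + Real.log ((j : ℝ) / (i : ℝ))) ^ ν := by
  obtain ⟨hPP, hPA⟩ := aux_spec A P lam hP
  have hnil : ∀ m, ν < m → P * (A - lam • 1) ^ m = 0 := by
    intro m hm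
    have hc : Commute P (A - lam • 1) :=
      hPA.sub_right ((Commute.one_right P).smul_right lam)
    have h1 : P * (A - lam • 1) ^ (ν + 1) = 0 := by
      have := hν.1
      rw [hc.symm.mul_pow, IsIdempotentElem.pow_succ_eq ν hPP] at this
      rw [(hc.pow_right _).eq, this]
    obtain ⟨d, rfl⟩ := Nat.exists_eq_add_of_le (Nat.succ_le_of_lt hm)
    rw [pow_add, ← mul_assoc, h1, zero_mul]
  set Φ := Matrix.toEuclideanCLM (n := Fin q) (𝕜 := ℂ) with hΦ
  set x := Φ A with hx
  obtain ⟨K₁, K₂, hK₁, hK₂, hcomb⟩ := aux_comb x (Φ P) lam ν (by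
    intro m hm
    have := congrArg Φ (hnil m hm)
    simpa using this) w₀⁻¹
  set S : ℝ := ∑' k : ℕ, (1 / (k : ℝ) ^ 2)
  have hS : 0 ≤ S := tsum_nonneg fun k => by positivity
  set D : ℝ := (w₀ / b ^ 2 + 1 / b) * S with hD
  have hD0 : 0 ≤ D := by positivity
  refine ⟨K₂ * Real.exp (|lam.re| * D) * (1 + 1 / b + D) ^ ν *
      Real.exp (K₁ * (1 / b ^ 2 * S)), ?_⟩
  intro i j hi hij
  obtain ⟨n, rfl⟩ := Nat.exists_eq_add_of_le hij
  have hi0 : (0:ℝ) < i := by exact_mod_cast hi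
  set t : ℕ → ℝ := fun k => (w₀ + (k : ℝ) * b)⁻¹ with ht
  have ht0 : ∀ k, 0 ≤ t k := fun k => by simp only [ht]; positivity
  have htw : ∀ k, t k ≤ w₀⁻¹ := fun k => by
    have : 0 ≤ (k:ℝ) * b := by positivity
    exact inv_anti₀ hw₀ (by linarith)
  have hpr := hcomb t ht0 htw i n
  set s : ℝ := ∑ k ∈ Finset.range n, t (i + k) with hs
  have hs0 : 0 ≤ s := Finset.sum_nonneg fun k _ => ht0 _
  have hsL : |s - Real.log (((i + n : ℕ) : ℝ) / i) / b| ≤ D :=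
    (aux_sum w₀ b hw₀ hb i n hi).trans (by rw [hD]; gcongr; exact aux_sq i n)
  set r : ℝ := ((i + n : ℕ) : ℝ) / i with hr
  have hr1 : 1 ≤ r := by
    rw [hr, le_div_iff₀ hi0]; push_cast
    have : (0:ℝ) ≤ n := by positivity
    linarith
  have hL0 := Real.log_nonneg hr1
  set L := Real.log r with hL
  have hsq : ∑ k ∈ Finset.range n, t (i + k) ^ 2 ≤ 1 / b ^ 2 * S := by
    refine le_trans ?_ (mul_le_mul_of_nonneg_left (aux_sq i n) (by positivity))
    rw [Finset.mul_sum]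
    refine Finset.sum_le_sum fun k _ => ?_
    have : (0:ℝ) < ((i + k : ℕ) : ℝ) := by exact_mod_cast (by omega)
    have e : 1 / b ^ 2 * (1 / ((i + k : ℕ) : ℝ) ^ 2) = ((((i + k : ℕ) : ℝ) * b)⁻¹) ^ 2 := by
      field_simp
    rw [e]
    simp only [ht]
    gcongr
    linarith
  have hF : Φ (prodF A (fun k => w₀ + (k : ℝ) * b) i (i + n)) =
      ((List.range' i n).map fun k => 1 + (t k : ℂ) • x).prod := by
    rw [prodF, map_list_prod, List.map_map, Nat.add_sub_cancel_left]
    congr 2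
    funext k
    have e : (w₀ + (k:ℝ) * b)⁻¹ • A = ((t k : ℝ) : ℂ) • A := rfl
    simp only [Function.comp, map_add, map_one, e, map_smul, hx]
  unfold opNorm
  rw [← hΦ, map_mul, hF]
  have hexp : Real.exp (lam.re * s) ≤ Real.exp (|lam.re| * D) * r ^ (lam.re / b) := by
    rw [Real.rpow_def_of_pos (by linarith), ← Real.exp_add, Real.exp_le_exp, ← hL]
    have h1 : lam.re * (s - L / b) ≤ |lam.re| * D :=
      (le_abs_self _).trans (by rw [abs_mul]; gcongr)
    have : lam.re * s = lam.re * (s - L / b) + L * (lam.re / b) := by ring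
    linarith
  have hpow : (1 + s) ^ ν ≤ (1 + 1 / b + D) ^ ν * (1 + L) ^ ν := by
    rw [← mul_pow]
    gcongr
    have h1 := (abs_le.1 hsL).2
    have h2 : L / b = 1 / b * L := by ring
    have h3 : 0 ≤ 1 / b := by positivity
    nlinarith [mul_nonneg hD0 hL0]
  have hr0 : 0 ≤ r ^ (lam.re / b) := Real.rpow_nonneg (by linarith) _
  calc _ ≤ _ := hpr
    _ ≤ (K₂ * (Real.exp (|lam.re| * D) * r ^ (lam.re / b)) * ((1 + 1 / b + D) ^ ν * (1 + L) ^ ν)) *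
      Real.exp (K₁ * (1 / b ^ 2 * S)) := by
        gcongr
    _ = _ := by ring
end

section
/- Under the Pólya urn hypotheses, let p ≥ 2 and assume sup_n ‖X_{n+1} − X_n‖_p < ∞. Then for every eigenvalue λ of A there is a constant C (depending on the data and p but not on n) such that for every n ≥ 2: ‖P_λ(X_n − E X_n)‖_p ≤ C n^{1/2} if Re λ < b/2; ‖P_λ(X_n − E X_n)‖_p ≤ C n^{1/2} (log n)^{ν_λ + 1/2} if Re λ = b/2; and ‖P_λ(X_n − E X_n)‖_p ≤ C n^{Re λ / b} (log n)^{ν_λ} if Re λ > b/2. -/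
open MeasureTheory Matrix Filter

lemma urn_bern {p t : ℝ} (hp : 2 ≤ p) (h1 : -1 ≤ t) (h2 : t ≤ 1) :
    (1 + t) ^ p ≤ 1 + p * t + p * (p + 2 ^ p) * t ^ 2 := by
  have h2p : (0:ℝ) < 2 ^ p := by positivity
  rcases eq_or_lt_of_le h1 with h | h
  · rw [← h]
    have : (1 + -1 : ℝ) = 0 := by norm_num
    rw [this, Real.zero_rpow (by linarith)]
    nlinarith [mul_pos (by linarith : (0:ℝ) < p) h2p]
  have hpos : 0 < 1 + t := by linarith
  have hA : (1 + t) ^ p ≤ 1 + p * (t * (1 + t) ^ (p - 1)) := by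
    have hs : -1 ≤ -t / (1 + t) := by
      rw [le_div_iff₀ hpos]; linarith
    have hb := one_add_mul_self_le_rpow_one_add hs (by linarith : (1:ℝ) ≤ p)
    have e1 : 1 + -t / (1 + t) = 1 / (1 + t) := by field_simp; ring
    rw [e1, Real.div_rpow zero_le_one hpos.le, Real.one_rpow] at hb
    have hpp : 0 < (1 + t) ^ p := Real.rpow_pos_of_pos hpos p
    have hb2 := mul_le_mul_of_nonneg_left hb hpp.le
    have e2 : (1 + t) ^ p * (1 / (1 + t) ^ p) = 1 := by field_simp
    have e3 : (1 + t) ^ (p - 1) = (1 + t) ^ p / (1 + t) := by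
      rw [Real.rpow_sub hpos, Real.rpow_one]
    rw [e2] at hb2
    rw [e3]
    have e4 : (1 + t) ^ p * (1 + p * (-t / (1 + t))) = (1+t)^p - p * (t * ((1 + t) ^ p / (1 + t))) := by
      field_simp; ring
    linarith
  have hB : t * (1 + t) ^ (p - 1) ≤ t + (p + 2 ^ p) * t ^ 2 := by
    rcases le_total 0 t with ht | ht
    · have hc : (1 + t) ^ (p - 1) ≤ 1 + 2 ^ p * t := by
        have hcv := (convexOn_rpow (by linarith : (1:ℝ) ≤ p - 1)).2
          (show (1:ℝ) ∈ Set.Ici (0:ℝ) by simp) (show (2:ℝ) ∈ Set.Ici (0:ℝ) by simp)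
          (show 0 ≤ 1 - t by linarith) ht (by ring)
        simp only [smul_eq_mul, Real.one_rpow] at hcv
        have e : (1 - t) * 1 + t * 2 = 1 + t := by ring
        rw [e] at hcv
        have h3 : (2:ℝ) ^ (p - 1) ≤ 2 ^ p :=
          Real.rpow_le_rpow_of_exponent_le (by norm_num) (by linarith)
        nlinarith
      have := mul_le_mul_of_nonneg_left hc ht
      nlinarith [mul_nonneg (by linarith : (0:ℝ) ≤ p) (sq_nonneg t)]
    · have hb := one_add_mul_self_le_rpow_one_add h1 (by linarith : (1:ℝ) ≤ p - 1)
      have := mul_le_mul_of_nonpos_left hb ht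
      nlinarith [mul_nonneg h2p.le (sq_nonneg t), sq_nonneg t]
  nlinarith [mul_le_mul_of_nonneg_left hB (by linarith : (0:ℝ) ≤ p)]

lemma urn_taylor {p : ℝ} (hp : 2 ≤ p) : ∃ C : ℝ, 1 ≤ C ∧ ∀ x y : ℝ,
    |x + y| ^ p ≤ |x| ^ p + p * (|x| ^ (p - 2) * x * y)
      + C * (|x| ^ (p - 2) * y ^ 2 + |y| ^ p) := by
  have h2p : (0:ℝ) < 2 ^ p := by positivity
  refine ⟨p * (p + 2 ^ p) + 2 ^ p + p, by nlinarith, fun x y => ?_⟩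
  have hxp : 0 ≤ |x| ^ p := by positivity
  have hyp : 0 ≤ |y| ^ p := by positivity
  have hx2 : 0 ≤ |x| ^ (p - 2) := by positivity
  rcases le_or_gt |y| |x| with hxy | hxy
  · rcases eq_or_ne x 0 with hx | hx
    · have hy : y = 0 := by simpa [hx] using hxy
      subst hx; subst hy
      have : (0:ℝ) ^ p = 0 := Real.zero_rpow (by linarith)
      simp [this]
    have hxa : 0 < |x| := abs_pos.mpr hx
    have ht : |y / x| ≤ 1 := by rw [abs_div, div_le_one hxa]; exact hxy
    obtain ⟨t1, t2⟩ := abs_le.mp ht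
    have hb := urn_bern hp t1 t2
    have e : |x + y| ^ p = |x| ^ p * (1 + y / x) ^ p := by
      rw [← Real.mul_rpow (abs_nonneg _) (by linarith)]
      congr 1
      rw [← abs_of_nonneg (by linarith : 0 ≤ 1 + y / x), ← abs_mul]
      congr 1; field_simp
    have e2 : |x| ^ p = |x| ^ (p - 2) * x ^ 2 := by
      rw [← sq_abs x, ← Real.rpow_natCast |x| 2, ← Real.rpow_add hxa]; congr 1; push_cast; ring
    have e3 : |x| ^ p * (1 + p * (y / x) + p * (p + 2 ^ p) * (y / x) ^ 2) =
      |x| ^ p + p * (|x| ^ (p - 2) * x * y) + p * (p + 2 ^ p) * (|x| ^ (p - 2) * y ^ 2) := by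
      rw [e2]; field_simp
    have := mul_le_mul_of_nonneg_left hb hxp
    rw [e3, ← e] at this
    have h5 : 0 ≤ |x| ^ (p - 2) * y ^ 2 := by positivity
    have h6 : 0 ≤ p * (p + 2 ^ p) * |y| ^ p := by positivity
    nlinarith [mul_nonneg h2p.le h5, mul_nonneg h2p.le hyp,
      mul_nonneg (by linarith : (0:ℝ) ≤ p) h5, mul_nonneg (by linarith : (0:ℝ) ≤ p) hyp]
  · have hy : 0 < |y| := lt_of_le_of_lt (abs_nonneg _) hxy
    have h1 : |x + y| ^ p ≤ 2 ^ p * |y| ^ p := by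
      rw [← Real.mul_rpow (by norm_num) (abs_nonneg _)]
      apply Real.rpow_le_rpow (abs_nonneg _) _ (by linarith)
      calc |x + y| ≤ |x| + |y| := abs_add_le _ _
        _ ≤ _ := by linarith
    have h2 : -(|x| ^ (p - 2) * x * y) ≤ |y| ^ p := by
      have e2 : |y| ^ p = |y| ^ (p - 2) * (|y| * |y|) := by
        rw [← pow_two, ← Real.rpow_natCast |y| 2, ← Real.rpow_add hy]; congr 1; push_cast; ring
      rw [e2]
      calc -(|x| ^ (p - 2) * x * y) = |x| ^ (p - 2) * (-(x * y)) := by ring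
        _ ≤ |x| ^ (p - 2) * (|x| * |y|) := by
          gcongr; rw [← abs_mul]; exact neg_le_abs _
        _ ≤ _ := by
          gcongr
    have h5 : 0 ≤ |x| ^ (p - 2) * y ^ 2 := by positivity
    have h6 : 0 ≤ p * (p + 2 ^ p) * |y| ^ p := by positivity
    have h7 : 0 ≤ (p * (p + 2 ^ p) + 2 ^ p + p) * (|x| ^ (p - 2) * y ^ 2) := by positivity
    nlinarith [mul_le_mul_of_nonneg_left h2 (by linarith : (0:ℝ) ≤ p)]

lemma urn_young {p : ℝ} (hp : 2 ≤ p) {u v : ℝ} (hu : 0 ≤ u) (hv : 0 ≤ v) :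
    u ^ (p - 2) * v ^ 2 ≤ u ^ p + v ^ p := by
  have key : ∀ w : ℝ, 0 ≤ w → w ^ p = w ^ (p - 2) * w ^ 2 := by
    intro w hw
    rw [← Real.rpow_natCast w 2, ← Real.rpow_add' hw (by push_cast; linarith)]
    congr 1; push_cast; ring
  rcases le_total u v with h | h
  · have : u ^ (p - 2) * v ^ 2 ≤ v ^ p := by
      rw [key v hv]; gcongr
    linarith [Real.rpow_nonneg hu p]
  · have : u ^ (p - 2) * v ^ 2 ≤ u ^ p := by
      rw [key u hu]; gcongr
    linarith [Real.rpow_nonneg hv p]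

lemma urn_young_scaled {p : ℝ} (hp : 2 ≤ p) {m d : ℝ} (hm : 0 < m) (hd : 0 < d) (x y : ℝ) :
    |x| ^ (p - 2) * y ^ 2 ≤ m ^ (p - 2) * d ^ 2 * (|x| ^ p / m ^ p + |y| ^ p / d ^ p) := by
  have h := urn_young hp (u := |x| / m) (v := |y| / d) (by positivity) (by positivity)
  rw [Real.div_rpow (abs_nonneg _) hm.le, Real.div_rpow (abs_nonneg _) hm.le,
    Real.div_rpow (abs_nonneg _) hd.le, div_pow, sq_abs] at h
  have hmp : 0 < m ^ (p - 2) := by positivity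
  have := mul_le_mul_of_nonneg_left h (by positivity : 0 ≤ m ^ (p - 2) * d ^ 2)
  refine le_trans (le_of_eq ?_) this
  field_simp

lemma urn_super {p C m d : ℝ} (hp : 2 ≤ p) (hC : 1 ≤ C) (hm : 0 < m) (hd : 0 < d) :
    m ^ p + C * (2 * (m ^ (p - 2) * d ^ 2) + d ^ p) ≤ (m ^ 2 + 4 * C * d ^ 2) ^ (p / 2) := by
  have hr : 1 ≤ p / 2 := by linarith
  have em : ∀ w : ℝ, 0 < w → (w ^ 2) ^ (p / 2) = w ^ p := by
    intro w hw
    rw [← Real.rpow_natCast w 2, ← Real.rpow_mul hw.le]; congr 1; push_cast; ring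
  have h1 : m ^ p + 2 * C * p * (m ^ (p - 2) * d ^ 2) ≤ (m ^ 2 + 4 * C * d ^ 2) ^ (p / 2) := by
    have hb := one_add_mul_self_le_rpow_one_add
      (by have : 0 ≤ 4 * C * d ^ 2 / m ^ 2 := by positivity
          linarith : -1 ≤ 4 * C * d ^ 2 / m ^ 2) hr
    have e : (m ^ 2 + 4 * C * d ^ 2) = m ^ 2 * (1 + 4 * C * d ^ 2 / m ^ 2) := by field_simp
    rw [e, Real.mul_rpow (by positivity) (by positivity), em m hm]
    have hmp : 0 < m ^ p := by positivity
    refine le_trans (le_of_eq ?_) (mul_le_mul_of_nonneg_left hb hmp.le)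
    have e2 : m ^ p = m ^ (p - 2) * m ^ 2 := by
      rw [← Real.rpow_natCast m 2, ← Real.rpow_add hm]; congr 1; push_cast; ring
    rw [e2]; field_simp; ring
  have h2 : m ^ p + 4 * C * d ^ p ≤ (m ^ 2 + 4 * C * d ^ 2) ^ (p / 2) := by
    have h := Real.add_rpow_le_rpow_add (a := m ^ 2) (b := 4 * C * d ^ 2) (by positivity) (by positivity) hr
    rw [Real.mul_rpow (by positivity) (by positivity), em m hm, em d hd] at h
    have h4 : 4 * C ≤ (4 * C) ^ (p / 2) := by
      conv_lhs => rw [← Real.rpow_one (4 * C)]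
      exact Real.rpow_le_rpow_of_exponent_le (by linarith) hr
    have hdp : 0 < d ^ p := by positivity
    nlinarith
  have h3 : 0 < C * (m ^ (p - 2) * d ^ 2) := by positivity
  have h4 : 0 < C * d ^ p := by positivity
  nlinarith

lemma urn_step {p : ℝ} (hp : 2 ≤ p) : ∃ K : ℝ, 0 < K ∧ ∀ {Ω : Type} {m0 : MeasurableSpace Ω}
    (μ : Measure Ω) [IsProbabilityMeasure μ] (m' : MeasurableSpace Ω) (_ : m' ≤ m0)
    (x y : Ω → ℝ), StronglyMeasurable[m'] x → MemLp x (ENNReal.ofReal p) μ →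
    MemLp y (ENNReal.ofReal p) μ → μ[y|m'] =ᵐ[μ] 0 →
    ∀ m d : ℝ, 0 < m → 0 < d → ∫ ω, |x ω| ^ p ∂μ ≤ m ^ p → ∫ ω, |y ω| ^ p ∂μ ≤ d ^ p →
    ∫ ω, |x ω + y ω| ^ p ∂μ ≤ (m ^ 2 + K * d ^ 2) ^ (p / 2) := by
  obtain ⟨C, hC, hT⟩ := urn_taylor hp
  refine ⟨4 * C, by linarith, ?_⟩
  intro Ω m0 μ _ m' hm' x y hxm hx hy hce m d hm hd hxi hyi
  have hp0 : ENNReal.ofReal p ≠ 0 := by simp; linarith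
  have hpt : ENNReal.ofReal p ≠ ⊤ := ENNReal.ofReal_ne_top
  have htr : (ENNReal.ofReal p).toReal = p := ENNReal.toReal_ofReal (by linarith)
  have hxI : Integrable (fun ω => |x ω| ^ p) μ := by
    have := hx.integrable_norm_rpow hp0 hpt
    simpa [htr] using this
  have hyI : Integrable (fun ω => |y ω| ^ p) μ := by
    have := hy.integrable_norm_rpow hp0 hpt
    simpa [htr] using this
  have hy1 : Integrable y μ := hy.integrable (by
    rw [← ENNReal.ofReal_one]; exact ENNReal.ofReal_le_ofReal (by linarith))
  have hfm : StronglyMeasurable[m'] (fun ω => |x ω| ^ (p - 2) * x ω) := by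
    have hmx : Measurable[m'] x := hxm.measurable
    have : Measurable[m'] (fun ω => |x ω| ^ (p - 2) * x ω) :=
      (((Measurable.abs hmx).pow_const (p - 2))).mul hmx
    exact this.stronglyMeasurable
  have hfg : Integrable ((fun ω => |x ω| ^ (p - 2) * x ω) * y) μ := by
    refine Integrable.mono' (hxI.add (hxI.add hyI)) ?_ ?_
    · exact ((hfm.mono hm').aestronglyMeasurable).mul hy1.aestronglyMeasurable
    · refine Eventually.of_forall fun ω => ?_
      simp only [Pi.mul_apply, Pi.add_apply, norm_mul, Real.norm_eq_abs]
      rw [abs_of_nonneg (Real.rpow_nonneg (abs_nonneg _) _)]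
      have h1 := urn_young hp (abs_nonneg (x ω)) (abs_nonneg (y ω))
      have h2 := urn_young hp (abs_nonneg (x ω)) (abs_nonneg (x ω))
      have h3 : |x ω| ^ p = |x ω| ^ (p - 2) * |x ω| ^ 2 := by
        rw [← Real.rpow_natCast _ 2, ← Real.rpow_add' (abs_nonneg _) (by push_cast; linarith)]
        congr 1; push_cast; ring
      have h4 : 0 ≤ |x ω| ^ (p - 2) := by positivity
      have h5 := mul_le_mul_of_nonneg_left (two_mul_le_add_sq |x ω| |y ω|) h4
      nlinarith [mul_nonneg h4 (mul_nonneg (abs_nonneg (x ω)) (abs_nonneg (y ω)))]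
  have hzero : ∫ ω, |x ω| ^ (p - 2) * x ω * y ω ∂μ = 0 := by
    have h1 := condExp_mul_of_stronglyMeasurable_left hfm hfg hy1
    have h2 := integral_condExp (μ := μ) hm' (f := (fun ω => |x ω| ^ (p - 2) * x ω) * y)
    have h3 : μ[(fun ω => |x ω| ^ (p - 2) * x ω) * y|m'] =ᵐ[μ] 0 := by
      filter_upwards [h1, hce] with ω a b
      rw [a, Pi.mul_apply, b]; simp
    rw [integral_congr_ae h3] at h2
    simpa using h2.symm
  have hmp : 0 < m ^ p := by positivity
  have hdp : 0 < d ^ p := by positivity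
  have hfgI : Integrable (fun ω => p * (|x ω| ^ (p - 2) * x ω * y ω)) μ := hfg.const_mul p
  have hQ : Integrable (fun ω => |x ω| ^ p / m ^ p + |y ω| ^ p / d ^ p) μ :=
    (hxI.div_const _).add (hyI.div_const _)
  have hR : Integrable (fun ω => C * (m ^ (p - 2) * d ^ 2 * (|x ω| ^ p / m ^ p + |y ω| ^ p / d ^ p)
      + |y ω| ^ p)) μ := ((hQ.const_mul _).add hyI).const_mul C
  have hle : ∫ ω, |x ω + y ω| ^ p ∂μ ≤ ∫ ω, (|x ω| ^ p + p * (|x ω| ^ (p - 2) * x ω * y ω)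
      + C * (m ^ (p - 2) * d ^ 2 * (|x ω| ^ p / m ^ p + |y ω| ^ p / d ^ p) + |y ω| ^ p)) ∂μ := by
    apply integral_mono_of_nonneg
    · exact Eventually.of_forall fun ω => by positivity
    · exact (hxI.add hfgI).add hR
    · refine Eventually.of_forall fun ω => (hT (x ω) (y ω)).trans ?_
      have := urn_young_scaled hp hm hd (x ω) (y ω)
      dsimp only
      gcongr
  refine hle.trans (le_trans ?_ (urn_super hp hC hm hd))
  have hS : Integrable (fun ω => |x ω| ^ p + p * (|x ω| ^ (p - 2) * x ω * y ω)) μ := hxI.add hfgI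
  rw [integral_add hS hR, integral_add hxI hfgI, integral_const_mul, hzero,
    integral_const_mul, integral_add (hQ.const_mul _) hyI, integral_const_mul,
    integral_add (hxI.div_const _) (hyI.div_const _), integral_div, integral_div]
  have a1 : (∫ ω, |x ω| ^ p ∂μ) / m ^ p ≤ 1 := by rw [div_le_one hmp]; exact hxi
  have a2 : (∫ ω, |y ω| ^ p ∂μ) / d ^ p ≤ 1 := by rw [div_le_one hdp]; exact hyi
  have a3 : m ^ (p - 2) * d ^ 2 * ((∫ ω, |x ω| ^ p ∂μ) / m ^ p + (∫ ω, |y ω| ^ p ∂μ) / d ^ p)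
    ≤ m ^ (p - 2) * d ^ 2 * 2 := by gcongr; linarith
  have a4 : C * (m ^ (p - 2) * d ^ 2 * ((∫ ω, |x ω| ^ p ∂μ) / m ^ p + (∫ ω, |y ω| ^ p ∂μ) / d ^ p)
    + ∫ ω, |y ω| ^ p ∂μ) ≤ C * (2 * (m ^ (p - 2) * d ^ 2) + d ^ p) :=
    mul_le_mul_of_nonneg_left (by linarith) (by linarith)
  linarith


lemma urn_mart {p : ℝ} (hp : 2 ≤ p) : ∃ K : ℝ, 0 < K ∧ ∀ {Ω : Type} {m0 : MeasurableSpace Ω}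
    (μ : Measure Ω) [IsProbabilityMeasure μ] (ℱ : Filtration ℕ m0)
    (y : ℕ → Ω → ℝ), (∀ k, StronglyMeasurable[ℱ (k + 1)] (y k)) →
    (∀ k, MemLp (y k) (ENNReal.ofReal p) μ) → (∀ k, μ[y k|ℱ k] =ᵐ[μ] 0) →
    ∀ (n : ℕ) (d : ℕ → ℝ), (∀ k < n, 0 < d k) →
    (∀ k < n, eLpNorm (y k) (ENNReal.ofReal p) μ ≤ ENNReal.ofReal (d k)) →
    eLpNorm (fun ω => ∑ k ∈ Finset.range n, y k ω) (ENNReal.ofReal p) μ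
      ≤ ENNReal.ofReal (Real.sqrt (1 + K * ∑ k ∈ Finset.range n, d k ^ 2)) := by
  obtain ⟨K, hK, hS⟩ := urn_step hp
  refine ⟨K, hK, ?_⟩
  intro Ω m0 μ _ ℱ y hym hyL hyc n d hd hyd
  have hp0 : ENNReal.ofReal p ≠ 0 := by simp; linarith
  have hpt : ENNReal.ofReal p ≠ ⊤ := ENNReal.ofReal_ne_top
  have htr : (ENNReal.ofReal p).toReal = p := ENNReal.toReal_ofReal (by linarith)
  have hML : ∀ k, MemLp (fun ω => ∑ j ∈ Finset.range k, y j ω) (ENNReal.ofReal p) μ :=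
    fun k => memLp_finsetSum _ fun j _ => hyL j
  have hMm : ∀ k, StronglyMeasurable[ℱ k] (fun ω => ∑ j ∈ Finset.range k, y j ω) := by
    intro k
    refine Finset.stronglyMeasurable_fun_sum _ fun j hj => (hym j).mono (ℱ.mono ?_)
    exact Finset.mem_range.mp hj
  have hconv : ∀ k < n, ∫ ω, |y k ω| ^ p ∂μ ≤ d k ^ p := by
    intro k hk
    have h := hyd k hk
    rw [(hyL k).eLpNorm_eq_integral_rpow_norm hp0 hpt, htr,
      ENNReal.ofReal_le_ofReal_iff (hd k hk).le] at h
    simp only [Real.norm_eq_abs] at h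
    have h0 : 0 ≤ ∫ ω, |y k ω| ^ p ∂μ := integral_nonneg fun ω => by positivity
    have := Real.rpow_le_rpow (by positivity) h (by linarith : 0 ≤ p)
    rwa [← Real.rpow_mul h0, inv_mul_cancel₀ (by linarith), Real.rpow_one] at this
  have em : ∀ w : ℝ, 0 ≤ w → (Real.sqrt w) ^ p = w ^ (p / 2) := by
    intro w hw
    rw [Real.sqrt_eq_rpow, ← Real.rpow_mul hw]; congr 1; ring
  have main : ∀ k ≤ n, ∫ ω, |∑ j ∈ Finset.range k, y j ω| ^ p ∂μ
      ≤ (1 + K * ∑ j ∈ Finset.range k, d j ^ 2) ^ (p / 2) := by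
    intro k
    induction k with
    | zero =>
      intro _
      simp [Real.zero_rpow (by linarith : p ≠ 0)]
    | succ k ih =>
      intro hk
      have hs : 0 ≤ ∑ j ∈ Finset.range k, d j ^ 2 := Finset.sum_nonneg fun j _ => sq_nonneg _
      have hpos : 0 < 1 + K * ∑ j ∈ Finset.range k, d j ^ 2 := by positivity
      have := hS μ (ℱ k) (ℱ.le k) _ (y k) (hMm k) (hML k) (hyL k) (hyc k)
        (Real.sqrt (1 + K * ∑ j ∈ Finset.range k, d j ^ 2)) (d k) (Real.sqrt_pos.mpr hpos)
        (hd k hk) (by rw [em _ hpos.le]; exact ih (by omega)) (hconv k hk)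
      rw [Real.sq_sqrt hpos.le] at this
      simp only [Finset.sum_range_succ]
      refine this.trans (le_of_eq ?_)
      congr 1; ring
  have hs : 0 ≤ ∑ j ∈ Finset.range n, d j ^ 2 := Finset.sum_nonneg fun j _ => sq_nonneg _
  have hpos : 0 < 1 + K * ∑ j ∈ Finset.range n, d j ^ 2 := by positivity
  rw [(hML n).eLpNorm_eq_integral_rpow_norm hp0 hpt, htr]
  apply ENNReal.ofReal_le_ofReal
  simp only [Real.norm_eq_abs]
  have h0 : 0 ≤ ∫ ω, |∑ j ∈ Finset.range n, y j ω| ^ p ∂μ := integral_nonneg fun ω => by positivity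
  have := Real.rpow_le_rpow h0 (main n le_rfl) (by positivity : 0 ≤ p⁻¹)
  refine this.trans (le_of_eq ?_)
  rw [← Real.rpow_mul hpos.le, Real.sqrt_eq_rpow]
  congr 1; field_simp

/-- Linear algebra -/
lemma urn_proj {q : ℕ} {A : Matrix (Fin q) (Fin q) ℂ} {lam : ℂ} {P : Matrix (Fin q) (Fin q) ℂ}
    (hP : IsSpectralProj A lam P) : P * A = A * P ∧ P * P = P := by
  have hind : ∀ B C : Matrix (Fin q) (Fin q) ℂ,
      (∀ mu : ℂ, ∀ v : Fin q → ℂ, ((A - mu • 1) ^ q).mulVec v = 0 → B.mulVec v = C.mulVec v) →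
      B = C := by
    intro B C h
    apply Matrix.toLin'.injective
    have htop := Module.End.iSup_maxGenEigenspace_eq_top (Matrix.toLin' A)
    have hle : (⨆ mu, Module.End.maxGenEigenspace (Matrix.toLin' A) mu) ≤
        LinearMap.eqLocus (Matrix.toLin' B) (Matrix.toLin' C) := by
      apply iSup_le
      intro mu v hv
      rw [Module.End.maxGenEigenspace_eq_genEigenspace_finrank, Module.finrank_fin_fun,
        Module.End.mem_genEigenspace_nat] at hv
      rw [LinearMap.mem_eqLocus, Matrix.toLin'_apply, Matrix.toLin'_apply]
      apply h mu v
      have e : Matrix.toLin' A - mu • 1 = Matrix.toLin' (A - mu • 1) := by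
        simp [map_sub, Module.End.one_eq_id]
      rw [e, ← Matrix.toLin'_pow, LinearMap.mem_ker, Matrix.toLin'_apply] at hv
      exact hv
    rw [htop] at hle
    ext1 i
    apply LinearMap.ext
    intro v
    exact hle (Submodule.mem_top (x := _))
  have hcomm : ∀ mu : ℂ, (A - mu • 1) ^ q * A = A * (A - mu • 1) ^ q := by
    intro mu
    have : Commute (A - mu • 1) A :=
      (Commute.refl A).sub_left ((Commute.one_left A).smul_left mu)
    exact this.pow_left q
  constructor
  · apply hind
    intro mu v hv
    have hAv : ((A - mu • 1) ^ q).mulVec (A.mulVec v) = 0 := by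
      rw [Matrix.mulVec_mulVec, hcomm, ← Matrix.mulVec_mulVec, hv, Matrix.mulVec_zero]
    rw [← Matrix.mulVec_mulVec, ← Matrix.mulVec_mulVec]
    by_cases h : mu = lam
    · subst h; rw [hP.1 _ hAv, hP.1 _ hv]
    · rw [hP.2 mu h _ hAv, hP.2 mu h _ hv, Matrix.mulVec_zero]
  · apply hind
    intro mu v hv
    rw [← Matrix.mulVec_mulVec]
    by_cases h : mu = lam
    · subst h; rw [hP.1 _ hv, hP.1 _ hv]
    · rw [hP.2 mu h _ hv, Matrix.mulVec_zero]

/-- The deterministic propagator. -/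
noncomputable def urnF {q : ℕ} (A : Matrix (Fin q) (Fin q) ℂ) (β : ℕ → ℂ) (m : ℕ) :
    ℕ → Matrix (Fin q) (Fin q) ℂ
  | 0 => 1
  | n + 1 => if n < m then 1 else (1 + β n • A) * urnF A β m n

lemma urnF_of_le {q : ℕ} (A : Matrix (Fin q) (Fin q) ℂ) (β : ℕ → ℂ) (m n : ℕ) (h : n ≤ m) :
    urnF A β m n = 1 := by
  cases n with
  | zero => rfl
  | succ n => simp only [urnF]; rw [if_pos (by omega)]

lemma urnF_succ {q : ℕ} (A : Matrix (Fin q) (Fin q) ℂ) (β : ℕ → ℂ) (m n : ℕ) (h : m ≤ n) :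
    urnF A β m (n + 1) = (1 + β n • A) * urnF A β m n := by
  simp only [urnF]; rw [if_neg (by omega)]

lemma urn_solve {q : ℕ} (A : Matrix (Fin q) (Fin q) ℂ) (β : ℕ → ℂ) (z ξ : ℕ → Fin q → ℂ)
    (h0 : z 0 = 0) (hs : ∀ n, z (n + 1) = (1 + β n • A).mulVec (z n) + ξ n) (n : ℕ) :
    z n = ∑ k ∈ Finset.range n, (urnF A β (k + 1) n).mulVec (ξ k) := by
  induction n with
  | zero => simp [h0]
  | succ n ih =>
    rw [hs, ih, Finset.sum_range_succ, urnF_of_le _ _ _ _ le_rfl, Matrix.one_mulVec,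
      Matrix.mulVec_sum]
    congr 1
    apply Finset.sum_congr rfl
    intro k hk
    rw [urnF_succ _ _ _ _ (Finset.mem_range.mp hk), Matrix.mulVec_mulVec]

lemma urnF_rec {q : ℕ} {A : Matrix (Fin q) (Fin q) ℂ} {lam : ℂ} {P : Matrix (Fin q) (Fin q) ℂ}
    (hP : IsSpectralProj A lam P) (β : ℕ → ℂ) (m n i : ℕ) (h : m ≤ n) :
    ((A - lam • 1) * P) ^ i * P * urnF A β m (n + 1) =
      (1 + lam * β n) • (((A - lam • 1) * P) ^ i * P * urnF A β m n) +
      β n • (((A - lam • 1) * P) ^ (i + 1) * P * urnF A β m n) := by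
  obtain ⟨hc, hi⟩ := urn_proj hP
  rw [urnF_succ _ _ _ _ h, pow_succ]
  have e : P * (1 + β n • A) = (1 + lam * β n) • P + β n • ((A - lam • 1) * P * P) := by
    rw [mul_assoc, hi, mul_add, mul_smul_comm, hc, sub_mul, smul_mul_assoc, one_mul, mul_one,
      add_smul, one_smul, smul_sub, smul_smul, mul_comm lam]
    abel
  calc ((A - lam • 1) * P) ^ i * P * ((1 + β n • A) * urnF A β m n)
      = ((A - lam • 1) * P) ^ i * (P * (1 + β n • A)) * urnF A β m n := by
        simp only [mul_assoc]
    _ = _ := by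
        rw [e, mul_add, add_mul]
        simp only [mul_smul_comm, smul_mul_assoc, mul_assoc]

/-- Abstract growth estimate. -/
lemma urn_growth (lam : ℂ) (β U V : ℕ → ℝ) (κ D : ℝ) (ν m : ℕ) (hβ : ∀ n, 0 ≤ β n) (hD : 0 ≤ D)
    (hκ : 0 ≤ κ)
    (hU : ∀ n, ‖1 + lam * (β n : ℂ)‖ ≤ Real.exp (U (n + 1) - U n))
    (hUκ : ∀ n, 1 ≤ κ * Real.exp (U (n + 1) - U n))
    (hV : ∀ n, β n ≤ V (n + 1) - V n)
    (H : ℕ → ℕ → ℂ)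
    (hH : ∀ i n, m ≤ n → H i (n + 1) = (1 + lam * (β n : ℂ)) * H i n + (β n : ℂ) * H (i + 1) n)
    (hH0 : ∀ i, ν < i → ∀ n, H i n = 0) (hHD : ∀ i, ‖H i m‖ ≤ D) (n : ℕ) (hmn : m ≤ n) :
    ‖H 0 n‖ ≤ D * Real.exp (U n - U m) * (1 + κ * (V n - V m)) ^ ν := by
  have hVm : ∀ n, m ≤ n → 0 ≤ V n - V m := by
    intro n hn
    induction n, hn using Nat.le_induction with
    | base => simp
    | succ n hn ih => linarith [hV n, hβ n]
  suffices h : ∀ n, m ≤ n → ∀ i ≤ ν,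
      ‖H i n‖ ≤ D * Real.exp (U n - U m) * (1 + κ * (V n - V m)) ^ (ν - i) by
    simpa using h n hmn 0 (Nat.zero_le _)
  intro n hn
  induction n, hn using Nat.le_induction with
  | base => intro i hi; simpa using hHD i
  | succ n hn ih =>
    intro i hi
    have hS := hVm n hn
    set S := 1 + κ * (V n - V m) with hSdef
    have hS1 : 1 ≤ S := by have := mul_nonneg hκ hS; linarith
    set E := Real.exp (U (n + 1) - U n) with hE
    have hEpos : 0 < E := Real.exp_pos _
    set T := Real.exp (U n - U m) with hT
    have hTpos : 0 < T := Real.exp_pos _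
    have eT : Real.exp (U (n + 1) - U m) = T * E := by
      rw [hT, hE, ← Real.exp_add]; congr 1; ring
    have hS' : S + κ * β n ≤ 1 + κ * (V (n + 1) - V m) := by
      have := mul_le_mul_of_nonneg_left (hV n) hκ
      rw [hSdef]; linarith
    have hκβ : 0 ≤ κ * β n := mul_nonneg hκ (hβ n)
    have hn1 : ‖H i (n + 1)‖ ≤ E * ‖H i n‖ + β n * ‖H (i + 1) n‖ := by
      rw [hH i n hn]
      refine (norm_add_le _ _).trans ?_
      rw [norm_mul, norm_mul, Complex.norm_real, Real.norm_of_nonneg (hβ n)]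
      have := mul_le_mul_of_nonneg_right (hU n) (norm_nonneg (H i n))
      linarith
    refine hn1.trans ?_
    rw [eT]
    have hDT : 0 ≤ D * (T * E) := by positivity
    have hpow : (S + κ * β n) ^ (ν - i) ≤ (1 + κ * (V (n + 1) - V m)) ^ (ν - i) := by
      gcongr
    refine le_trans ?_ (mul_le_mul_of_nonneg_left hpow hDT)
    have h1 := mul_le_mul_of_nonneg_left (ih i hi) hEpos.le
    rcases eq_or_lt_of_le hi with h | h
    · rw [hH0 (i + 1) (by omega) n]
      rw [h] at h1 ⊢
      simp only [Nat.sub_self, pow_zero, norm_zero] at h1 ⊢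
      linarith
    · have h2 := mul_le_mul_of_nonneg_left (ih (i + 1) h) (hβ n)
      obtain ⟨r, hr⟩ : ∃ r, ν - i = r + 1 := ⟨ν - i - 1, by omega⟩
      have hr' : ν - (i + 1) = r := by omega
      rw [hr'] at h2
      rw [hr] at h1 ⊢
      have hSr : 0 < S ^ r := by positivity
      have h3 : S ^ (r + 1) + κ * β n * S ^ r ≤ (S + κ * β n) ^ (r + 1) := by
        have : S ^ r ≤ (S + κ * β n) ^ r := by gcongr; linarith
        calc S ^ (r + 1) + κ * β n * S ^ r = S ^ r * (S + κ * β n) := by ring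
          _ ≤ (S + κ * β n) ^ r * (S + κ * β n) := by gcongr
          _ = _ := by ring
      have h4 := mul_le_mul_of_nonneg_left h3 hDT
      have h5 : β n * (D * T * S ^ r) ≤ D * (T * E) * (κ * β n * S ^ r) := by
        have := mul_le_mul_of_nonneg_left (hUκ n)
          (by have := hβ n; positivity : 0 ≤ β n * (D * T * S ^ r))
        calc β n * (D * T * S ^ r) = β n * (D * T * S ^ r) * 1 := by ring
          _ ≤ _ := this
          _ = _ := by ring
      calc E * ‖H i n‖ + β n * ‖H (i + 1) n‖
          ≤ E * (D * T * S ^ (r + 1)) + β n * (D * T * S ^ r) := by linarith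
        _ ≤ E * (D * T * S ^ (r + 1)) + D * (T * E) * (κ * β n * S ^ r) := by linarith
        _ = D * (T * E) * (S ^ (r + 1) + κ * β n * S ^ r) := by ring
        _ ≤ _ := h4


lemma urn_norm_one_add_le (z : ℂ) : ‖1 + z‖ ≤ Real.exp (z.re + ‖z‖ ^ 2 / 2) := by
  have h1 : ‖1 + z‖ ^ 2 = 1 + (2 * z.re + ‖z‖ ^ 2) := by
    rw [Complex.sq_norm, Complex.sq_norm, Complex.normSq_apply, Complex.normSq_apply]
    simp; ring
  have h2 : ‖1 + z‖ ^ 2 ≤ Real.exp (z.re + ‖z‖ ^ 2 / 2) ^ 2 := by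
    rw [h1, ← Real.exp_nat_mul]
    have := Real.add_one_le_exp (2 * z.re + ‖z‖ ^ 2)
    have e : ((2:ℕ):ℝ) * (z.re + ‖z‖ ^ 2 / 2) = 2 * z.re + ‖z‖ ^ 2 := by push_cast; ring
    rw [e]; linarith
  exact le_of_sq_le_sq h2 (Real.exp_pos _).le

lemma urn_log_bounds {t : ℝ} (ht : 0 < t) :
    1 / (t + 1) ≤ Real.log (t + 1) - Real.log t ∧ Real.log (t + 1) - Real.log t ≤ 1 / t := by
  rw [← Real.log_div (by linarith) ht.ne']
  constructor
  · have := Real.one_sub_inv_le_log_of_pos (by positivity : 0 < (t + 1) / t)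
    refine le_trans (le_of_eq ?_) this
    field_simp; ring
  · have := Real.log_le_sub_one_of_pos (by positivity : 0 < (t + 1) / t)
    refine this.trans (le_of_eq ?_)
    field_simp; ring

lemma urn_coef (lam : ℂ) {b w : ℝ} (hb : 0 < b) (hw : 0 < w) :
    ∃ C K : ℝ, 0 < C ∧ 0 ≤ K ∧ ∀ (D : ℝ) (ν m : ℕ) (H : ℕ → ℕ → ℂ), 0 ≤ D →
    (∀ i n, m ≤ n → H i (n + 1) = (1 + lam * (((w + n * b)⁻¹ : ℝ) : ℂ)) * H i n
      + (((w + n * b)⁻¹ : ℝ) : ℂ) * H (i + 1) n) →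
    (∀ i, ν < i → ∀ n, H i n = 0) → (∀ i, ‖H i m‖ ≤ D) → ∀ n, m ≤ n →
    ‖H 0 n‖ ≤ D * C * ((w / b + n) / (w / b + m)) ^ (lam.re / b) *
      (1 + K * Real.log ((w / b + n) / (w / b + m))) ^ ν := by
  set θ := w / b with hθ
  have hθp : 0 < θ := by positivity
  set ρ := lam.re / b with hρ
  set c1 := (1 + θ) / θ with hc1
  have hc1p : 0 < c1 := by positivity
  set c := |ρ| + ‖lam‖ ^ 2 / (2 * b ^ 2) * c1 with hc
  have hc0 : 0 ≤ c := by positivity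
  set κ := Real.exp (|ρ| / θ) with hκ
  have htp : ∀ n : ℕ, 0 < θ + n := fun n => by positivity
  have hβe : ∀ n : ℕ, (w + n * b)⁻¹ = 1 / b * (1 / (θ + n)) := by
    intro n
    have : w = θ * b := by rw [hθ]; field_simp
    have := htp n
    rw [show w + n * b = b * (θ + n) by rw [hθ]; field_simp]
    field_simp
  have hinv : ∀ n : ℕ, 1 / (θ + n) ≤ c1 * (1 / (θ + n + 1)) := by
    intro n
    have h := htp n
    have hn : (0:ℝ) ≤ n := Nat.cast_nonneg n
    rw [hc1, div_mul_div_comm, mul_one, div_le_div_iff₀ h (by positivity)]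
    nlinarith
  refine ⟨Real.exp (c / θ), κ * (c1 / b), Real.exp_pos _, by positivity, ?_⟩
  intro D ν m H hD hH hH0 hHD n hmn
  have key := urn_growth lam (fun n => (w + n * b)⁻¹)
    (fun n => ρ * Real.log (θ + n) - c / (θ + n)) (fun n => c1 / b * Real.log (θ + n)) κ D ν m
    (fun n => by positivity) hD (Real.exp_pos _).le ?_ ?_ ?_ H hH hH0 hHD n hmn
  · refine key.trans ?_
    have hlog : Real.log ((θ + n) / (θ + m)) = Real.log (θ + n) - Real.log (θ + m) :=
      Real.log_div (htp n).ne' (htp m).ne'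
    have e1 : 1 + κ * (c1 / b) * Real.log ((θ + n) / (θ + m)) =
      1 + κ * (c1 / b * Real.log (θ + n) - c1 / b * Real.log (θ + m)) := by rw [hlog]; ring
    have hl0 : 0 ≤ Real.log ((θ + n) / (θ + m)) := by
      apply Real.log_nonneg
      rw [one_le_div (htp m)]
      have : (m:ℝ) ≤ n := by exact_mod_cast hmn
      linarith
    have hbase : 0 ≤ 1 + κ * (c1 / b) * Real.log ((θ + n) / (θ + m)) := by
      have : 0 < κ := Real.exp_pos _
      positivity
    rw [e1] at hbase ⊢
    have h3 : Real.exp (ρ * Real.log (θ + n) - c / (θ + n) - (ρ * Real.log (θ + m) - c / (θ + m)))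
        ≤ Real.exp (c / θ) * ((θ + n) / (θ + m)) ^ ρ := by
      rw [Real.rpow_def_of_pos (div_pos (htp n) (htp m)), ← Real.exp_add, hlog]
      apply Real.exp_le_exp.mpr
      have a1 : 0 ≤ c / (θ + n) := div_nonneg hc0 (htp n).le
      have a2 : c / (θ + m) ≤ c / θ := by
        gcongr
        linarith [(Nat.cast_nonneg m : (0:ℝ) ≤ m)]
      nlinarith
    have h4 := mul_le_mul_of_nonneg_left h3 hD
    rw [← mul_assoc] at h4
    exact mul_le_mul_of_nonneg_right h4 (pow_nonneg hbase ν)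
  · intro n
    have h := htp n
    obtain ⟨l1, l2⟩ := urn_log_bounds h
    refine (urn_norm_one_add_le _).trans (Real.exp_le_exp.mpr ?_)
    rw [hβe n, Complex.re_mul_ofReal, norm_mul, Complex.norm_real,
      Real.norm_of_nonneg (by positivity)]
    have e0 : θ + ((n + 1 : ℕ) : ℝ) = θ + n + 1 := by push_cast; ring
    simp only [e0]
    set t := θ + (n:ℝ) with ht
    have e1 : lam.re * (1 / b * (1 / t)) = ρ * (1 / t) := by rw [hρ]; ring
    have e2 : (‖lam‖ * (1 / b * (1 / t))) ^ 2 / 2 = ‖lam‖ ^ 2 / (2 * b ^ 2) * (1 / t * (1 / t)) := by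
      field_simp
    have e3 : (1:ℝ) / t - 1 / (t + 1) = 1 / t * (1 / (t + 1)) := by field_simp; ring
    have a1 : 1 / t * (1 / t) ≤ c1 * (1 / t - 1 / (t + 1)) := by
      rw [e3]
      have := mul_le_mul_of_nonneg_left (hinv n) (by positivity : 0 ≤ 1 / t)
      linarith
    have a2 : ρ * (1 / t) - ρ * (Real.log (t + 1) - Real.log t) ≤ |ρ| * (1 / t - 1 / (t + 1)) := by
      rw [← mul_sub]
      calc ρ * (1 / t - (Real.log (t + 1) - Real.log t))
          ≤ |ρ| * (1 / t - (Real.log (t + 1) - Real.log t)) := by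
            apply mul_le_mul_of_nonneg_right (le_abs_self _); linarith
        _ ≤ _ := by gcongr
    have a3 := mul_le_mul_of_nonneg_left a1 (by positivity : 0 ≤ ‖lam‖ ^ 2 / (2 * b ^ 2))
    rw [e1, e2]
    have e4 : ρ * Real.log (t + 1) - c / (t + 1) - (ρ * Real.log t - c / t) =
      ρ * (Real.log (t + 1) - Real.log t) + |ρ| * (1 / t - 1 / (t + 1)) +
        ‖lam‖ ^ 2 / (2 * b ^ 2) * (c1 * (1 / t - 1 / (t + 1))) := by rw [hc]; ring
    rw [e4]; linarith
  · intro n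
    have h := htp n
    obtain ⟨l1, l2⟩ := urn_log_bounds h
    have e0 : θ + ((n + 1 : ℕ) : ℝ) = θ + n + 1 := by push_cast; ring
    simp only [e0]
    rw [hκ, ← Real.exp_add]
    apply Real.one_le_exp
    have hn : (0:ℝ) ≤ n := Nat.cast_nonneg n
    have a1 : c / (θ + n + 1) ≤ c / (θ + n) :=
      div_le_div_of_nonneg_left hc0 h (by linarith)
    have a2 : 1 / (θ + n) ≤ 1 / θ := by gcongr; linarith
    have a3 : -(|ρ| * (1 / θ)) ≤ ρ * (Real.log (θ + n + 1) - Real.log (θ + n)) := by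
      have hL : 0 ≤ Real.log (θ + n + 1) - Real.log (θ + n) := le_trans (by positivity) l1
      have b1 := mul_le_mul_of_nonneg_right (neg_abs_le ρ) hL
      have b2 := mul_le_mul_of_nonneg_left (l2.trans a2) (abs_nonneg ρ)
      linarith
    have e : |ρ| / θ = |ρ| * (1 / θ) := by ring
    rw [e]; linarith
  · intro n
    have h := htp n
    obtain ⟨l1, l2⟩ := urn_log_bounds h
    have e0 : θ + ((n + 1 : ℕ) : ℝ) = θ + n + 1 := by push_cast; ring
    simp only [e0]
    rw [hβe n]
    calc 1 / b * (1 / (θ + n)) ≤ 1 / b * (c1 * (1 / (θ + n + 1))) := by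
          have := hinv n; gcongr
      _ ≤ 1 / b * (c1 * (Real.log (θ + n + 1) - Real.log (θ + n))) := by gcongr
      _ = _ := by ring

/-- The coefficient bound as a function. -/
noncomputable def urnG (θ ρ D K : ℝ) (ν n k : ℕ) : ℝ :=
  D * ((θ + n) / (θ + (k + 1 : ℕ))) ^ ρ * (1 + K * Real.log ((θ + n) / (θ + (k + 1 : ℕ)))) ^ ν

lemma urn_sum_bound {θ s D M : ℝ} (hθ : 0 < θ) (hs : 0 ≤ s) (n : ℕ) (hn : 1 ≤ n)
    (hD : 0 ≤ D) (hM : 0 ≤ M)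
    (c : ℕ → ℝ) (hc : ∀ k < n, 0 ≤ c k ∧ c k ≤ D * ((θ + n) / (θ + (k + 1 : ℕ))) ^ s * M) :
    ∑ k ∈ Finset.range n, c k ^ 2 ≤
      D ^ 2 * M ^ 2 * (1 + θ) ^ (2 * s) * (n:ℝ) ^ (2 * s) *
        ∑ k ∈ Finset.range n, ((k:ℝ) + 1) ^ (-(2 * s)) := by
  rw [Finset.mul_sum]
  apply Finset.sum_le_sum
  intro k hk
  obtain ⟨h0, h1⟩ := hc k (Finset.mem_range.mp hk)
  have hn' : (1:ℝ) ≤ n := by exact_mod_cast hn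
  have hr : (θ + n) / (θ + (k + 1 : ℕ)) ≤ (1 + θ) * n / ((k:ℝ) + 1) := by
    push_cast
    rw [div_le_div_iff₀ (by positivity) (by positivity)]
    have hk0 : (0:ℝ) ≤ k := Nat.cast_nonneg k
    have a : θ + n ≤ (1 + θ) * n := by nlinarith
    have b : (k:ℝ) + 1 ≤ θ + (k + 1) := by linarith
    exact mul_le_mul a b (by positivity) (by positivity)
  have h2 : c k ≤ D * ((1 + θ) * n / ((k:ℝ) + 1)) ^ s * M := by
    refine h1.trans ?_
    gcongr
  have h3 : c k ^ 2 ≤ (D * ((1 + θ) * n / ((k:ℝ) + 1)) ^ s * M) ^ 2 := by gcongr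
  refine h3.trans (le_of_eq ?_)
  have e : (((1 + θ) * n / ((k:ℝ) + 1)) ^ s) ^ 2 =
      (1 + θ) ^ (2 * s) * (n:ℝ) ^ (2 * s) * ((k:ℝ) + 1) ^ (-(2 * s)) := by
    rw [← Real.rpow_natCast, ← Real.rpow_mul (by positivity), mul_comm s]
    push_cast
    rw [Real.div_rpow (by positivity) (by positivity), Real.mul_rpow (by positivity) (by positivity),
      Real.rpow_neg (by positivity)]
    ring
  rw [mul_pow, mul_pow, e]; ring

lemma urn_sum_small {s : ℝ} (hs0 : 0 ≤ s) (hs : s < 1) (n : ℕ) :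
    ∑ k ∈ Finset.range n, ((k:ℝ) + 1) ^ (-s) ≤ (n:ℝ) ^ (1 - s) / (1 - s) := by
  induction n with
  | zero => simp; positivity
  | succ n ih =>
    rw [Finset.sum_range_succ]
    have hn : (0:ℝ) < (n:ℝ) + 1 := by positivity
    have hb := rpow_one_add_le_one_add_mul_self (s := -1 / ((n:ℝ) + 1))
      (by rw [le_div_iff₀ hn]; have : (0:ℝ) ≤ n := Nat.cast_nonneg n
          linarith) (by linarith : 0 ≤ 1 - s) (by linarith)
    have e1 : 1 + -1 / ((n:ℝ) + 1) = n / (n + 1) := by field_simp; ring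
    rw [e1, Real.div_rpow (Nat.cast_nonneg n) hn.le, div_le_iff₀ (by positivity)] at hb
    have e2 : ((n:ℝ) + 1) ^ (1 - s) = (n + 1) * ((n:ℝ) + 1) ^ (-s) := by
      rw [sub_eq_add_neg, Real.rpow_add hn, Real.rpow_one]
    have h1s : 0 < 1 - s := by linarith
    push_cast
    have e3 : (1 + (1 - s) * (-1 / ((n:ℝ) + 1))) * ((n:ℝ) + 1) ^ (1 - s) =
      ((n:ℝ) + 1) ^ (1 - s) - (1 - s) * ((n:ℝ) + 1) ^ (-s) := by
      rw [e2]; field_simp; ring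
    rw [e3] at hb
    rw [le_div_iff₀ h1s] at ih ⊢
    linarith

lemma urn_log_const {n : ℕ} (hn : 2 ≤ n) (c : ℝ) (hc : 0 ≤ c) :
    c ≤ c / Real.log 2 * Real.log n := by
  have h2 : 0 < Real.log 2 := Real.log_pos (by norm_num)
  have : Real.log 2 ≤ Real.log n := Real.log_le_log (by norm_num) (by exact_mod_cast hn)
  rw [div_mul_eq_mul_div, le_div_iff₀ h2]
  gcongr

lemma urn_r_bounds {θ : ℝ} (hθ : 0 < θ) {n k : ℕ} (hk : k < n) :
    1 ≤ (θ + n) / (θ + (k + 1 : ℕ)) := by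
  rw [one_le_div (by positivity)]
  have : ((k + 1 : ℕ) : ℝ) ≤ n := by exact_mod_cast hk
  linarith

lemma urn_M_bound {θ K : ℝ} (hθ : 0 < θ) (hK : 0 ≤ K) : ∃ L : ℝ, 0 < L ∧ ∀ n k : ℕ, 2 ≤ n → k < n →
    1 + K * Real.log ((θ + n) / (θ + (k + 1 : ℕ))) ≤ L * Real.log n := by
  have h2 : 0 < Real.log 2 := Real.log_pos (by norm_num)
  have hl : 0 ≤ Real.log (1 + θ) := Real.log_nonneg (by linarith)
  refine ⟨(1 + K * Real.log (1 + θ)) / Real.log 2 + K, by positivity, fun n k hn hk => ?_⟩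
  have hn' : (2:ℝ) ≤ n := by exact_mod_cast hn
  have h := urn_log_const hn (1 + K * Real.log (1 + θ)) (by positivity)
  have h1 : Real.log ((θ + n) / (θ + (k + 1 : ℕ))) ≤ Real.log (1 + θ) + Real.log n := by
    rw [← Real.log_mul (by positivity) (by positivity)]
    apply Real.log_le_log (by positivity)
    rw [div_le_iff₀ (by positivity)]
    push_cast
    have hk0 : (0:ℝ) ≤ k := Nat.cast_nonneg k
    have a : θ + n ≤ (1 + θ) * n := by nlinarith
    have b : (1 + θ) * n ≤ (1 + θ) * n * (θ + (k + 1)) :=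
      le_mul_of_one_le_right (by positivity) (by linarith)
    linarith
  have := mul_le_mul_of_nonneg_left h1 hK
  linarith


lemma urnG_nonneg {θ ρ D K : ℝ} (hθ : 0 < θ) (hD : 0 < D) (hK : 0 ≤ K) {ν n k : ℕ} (hk : k < n) :
    0 < urnG θ ρ D K ν n k := by
  have h := urn_r_bounds hθ hk
  have hl := Real.log_nonneg h
  have : 0 < (θ + n) / (θ + (k + 1 : ℕ)) := by linarith
  unfold urnG
  positivity

lemma urn_final_small {θ ρ D K K1 : ℝ} (hθ : 0 < θ) (hD : 0 < D) (hK : 0 ≤ K) (hK1 : 0 ≤ K1)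
    (ν : ℕ) (hρ : ρ < 1 / 2) : ∃ C : ℝ, 0 ≤ C ∧ ∀ n : ℕ, 2 ≤ n →
    Real.sqrt (1 + K1 * ∑ k ∈ Finset.range n, urnG θ ρ D K ν n k ^ 2) ≤ C * (n:ℝ) ^ (1 / 2 : ℝ) := by
  -- pick `s` with `max ρ 0 < s < 1/2`
  obtain ⟨s, hs1, hs2⟩ := exists_between (max_lt hρ (by norm_num : (0:ℝ) < 1 / 2))
  have hsρ : ρ < s := (le_max_left _ _).trans_lt hs1
  have hs0 : 0 < s := (le_max_right _ _).trans_lt hs1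
  set ε := (s - ρ) / (ν + 1) with hε
  have hεp : 0 < ε := div_pos (by linarith) (by positivity)
  set M := (1 + K / ε) ^ ν with hM
  have hMp : 0 < M := by positivity
  have hb : ∀ n k : ℕ, k < n → 0 ≤ urnG θ ρ D K ν n k ∧
      urnG θ ρ D K ν n k ≤ D * ((θ + n) / (θ + (k + 1 : ℕ))) ^ s * M := by
    intro n k hk
    refine ⟨(urnG_nonneg hθ hD hK hk).le, ?_⟩
    have hr := urn_r_bounds hθ hk
    unfold urnG
    set r := (θ + n) / (θ + (k + 1 : ℕ)) with hrdef
    have hr0 : 0 < r := by linarith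
    have hl := Real.log_nonneg hr
    have h1 : 1 + K * Real.log r ≤ (1 + K / ε) * r ^ ε := by
      have a := Real.log_le_rpow_div hr0.le hεp
      have b : 1 ≤ r ^ ε := Real.one_le_rpow hr hεp.le
      have c := mul_le_mul_of_nonneg_left a hK
      have e : (1 + K / ε) * r ^ ε = r ^ ε + K * (r ^ ε / ε) := by ring
      rw [e]; linarith
    have h2 : (1 + K * Real.log r) ^ ν ≤ M * r ^ (s - ρ) := by
      calc (1 + K * Real.log r) ^ ν ≤ ((1 + K / ε) * r ^ ε) ^ ν := by gcongr
        _ = M * r ^ (ε * ν) := by rw [mul_pow, Real.rpow_mul_natCast hr0.le]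
        _ ≤ M * r ^ (s - ρ) := by
          gcongr
          rw [hε, div_mul_eq_mul_div, div_le_iff₀ (by positivity)]
          nlinarith
    calc D * r ^ ρ * (1 + K * Real.log r) ^ ν ≤ D * r ^ ρ * (M * r ^ (s - ρ)) := by gcongr
      _ = D * (r ^ ρ * r ^ (s - ρ)) * M := by ring
      _ = D * r ^ s * M := by rw [← Real.rpow_add hr0]; congr 3; ring
  set B := D ^ 2 * M ^ 2 * (1 + θ) ^ (2 * s) with hB
  have hBp : 0 < B := by positivity
  have h1s : 0 < 1 - 2 * s := by linarith
  refine ⟨Real.sqrt (1 + K1 * (B / (1 - 2 * s))), Real.sqrt_nonneg _, fun n hn => ?_⟩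
  have hn' : (2:ℝ) ≤ n := by exact_mod_cast hn
  have hn0 : (0:ℝ) < n := by linarith
  have hS := urn_sum_bound hθ hs0.le n (by omega) hD.le hMp.le _ (hb n)
  have hS2 := urn_sum_small (by linarith : 0 ≤ 2 * s) (by linarith) n
  have hS3 : ∑ k ∈ Finset.range n, urnG θ ρ D K ν n k ^ 2 ≤ B / (1 - 2 * s) * n := by
    refine hS.trans ((mul_le_mul_of_nonneg_left hS2 (by positivity)).trans (le_of_eq ?_))
    have e : (n:ℝ) ^ (2 * s) * (n:ℝ) ^ (1 - 2 * s) = n := by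
      rw [← Real.rpow_add hn0]; simp
    calc B * (n:ℝ) ^ (2 * s) * ((n:ℝ) ^ (1 - 2 * s) / (1 - 2 * s))
        = B / (1 - 2 * s) * ((n:ℝ) ^ (2 * s) * (n:ℝ) ^ (1 - 2 * s)) := by ring
      _ = _ := by rw [e]
  rw [← Real.sqrt_eq_rpow, ← Real.sqrt_mul (by positivity)]
  apply Real.sqrt_le_sqrt
  have := mul_le_mul_of_nonneg_left hS3 hK1
  nlinarith

/-- common part for the two remaining regimes -/
lemma urn_final_log {θ ρ D K : ℝ} (hθ : 0 < θ) (hD : 0 < D) (hK : 0 ≤ K)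
    (ν : ℕ) (hρ : 0 ≤ ρ) : ∃ B : ℝ, 0 < B ∧ ∀ n : ℕ, 2 ≤ n →
    ∑ k ∈ Finset.range n, urnG θ ρ D K ν n k ^ 2 ≤
      B * (n:ℝ) ^ (2 * ρ) * (Real.log n ^ ν) ^ 2 *
        ∑ k ∈ Finset.range n, ((k:ℝ) + 1) ^ (-(2 * ρ)) := by
  obtain ⟨L, hL, hLb⟩ := urn_M_bound hθ hK
  refine ⟨D ^ 2 * (L ^ ν) ^ 2 * (1 + θ) ^ (2 * ρ), by positivity, fun n hn => ?_⟩
  have hn' : (2:ℝ) ≤ n := by exact_mod_cast hn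
  have hlog : 0 ≤ Real.log n := Real.log_nonneg (by linarith)
  have hS := urn_sum_bound (M := (L * Real.log n) ^ ν) hθ hρ n (by omega) hD.le (by positivity)
    (fun k => urnG θ ρ D K ν n k) (by
      intro k hk
      refine ⟨(urnG_nonneg hθ hD hK hk).le, ?_⟩
      have hr := urn_r_bounds hθ hk
      have hl := Real.log_nonneg hr
      have := hLb n k hn hk
      unfold urnG
      gcongr)
  refine hS.trans (le_of_eq ?_)
  rw [mul_pow]; ring

lemma urn_final_crit {θ D K K1 : ℝ} (hθ : 0 < θ) (hD : 0 < D) (hK : 0 ≤ K) (hK1 : 0 ≤ K1)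
    (ν : ℕ) : ∃ C : ℝ, 0 ≤ C ∧ ∀ n : ℕ, 2 ≤ n →
    Real.sqrt (1 + K1 * ∑ k ∈ Finset.range n, urnG θ (1 / 2) D K ν n k ^ 2)
      ≤ C * (n:ℝ) ^ (1 / 2 : ℝ) * Real.log n ^ ((ν:ℝ) + 1 / 2) := by
  obtain ⟨B, hB, hS⟩ := urn_final_log (ρ := 1 / 2) hθ hD hK ν (by norm_num)
  have h2 : 0 < Real.log 2 := Real.log_pos (by norm_num)
  set E := (1 / Real.log 2) ^ (2 * ν + 1) + K1 * (B * (1 / Real.log 2 + 1)) with hE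
  have hEp : 0 < E := by positivity
  refine ⟨Real.sqrt E, Real.sqrt_nonneg _, fun n hn => ?_⟩
  have hn' : (2:ℝ) ≤ n := by exact_mod_cast hn
  have hn0 : (0:ℝ) < n := by linarith
  have hlog : 0 < Real.log n := Real.log_pos (by linarith)
  have h1 : 1 ≤ 1 / Real.log 2 * Real.log n := urn_log_const hn 1 (by norm_num)
  have hH : ∑ k ∈ Finset.range n, ((k:ℝ) + 1) ^ (-(2 * (1 / 2 : ℝ))) ≤
      (1 / Real.log 2 + 1) * Real.log n := by
    have e : ∑ k ∈ Finset.range n, ((k:ℝ) + 1) ^ (-(2 * (1 / 2 : ℝ))) = (harmonic n : ℝ) := by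
      rw [harmonic]; push_cast
      apply Finset.sum_congr rfl
      intro k _
      rw [show -(2 * (1 / 2 : ℝ)) = -1 by norm_num, Real.rpow_neg_one]
    rw [e]
    have := harmonic_le_one_add_log n
    linarith
  have hS' := hS n hn
  rw [show (2 * (1 / 2 : ℝ)) = 1 by norm_num, Real.rpow_one] at hS'
  rw [show (2 * (1 / 2 : ℝ)) = 1 by norm_num] at hH
  have hT : ∑ k ∈ Finset.range n, urnG θ (1 / 2) D K ν n k ^ 2 ≤
      B * (1 / Real.log 2 + 1) * (n * Real.log n ^ (2 * ν + 1)) := by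
    refine hS'.trans ((mul_le_mul_of_nonneg_left hH (by positivity)).trans (le_of_eq ?_))
    ring
  rw [Real.sqrt_le_iff]
  refine ⟨by positivity, ?_⟩
  have e2 : (Real.sqrt E * (n:ℝ) ^ (1 / 2 : ℝ) * Real.log n ^ ((ν:ℝ) + 1 / 2)) ^ 2 =
      E * (n * Real.log n ^ (2 * ν + 1)) := by
    rw [mul_pow, mul_pow, Real.sq_sqrt hEp.le, ← Real.sqrt_eq_rpow, Real.sq_sqrt hn0.le,
      ← Real.rpow_natCast (Real.log n ^ ((ν:ℝ) + 1 / 2)) 2, ← Real.rpow_mul hlog.le,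
      ← Real.rpow_natCast (Real.log n) (2 * ν + 1)]
    push_cast
    rw [mul_assoc]
    congr 3; ring
  rw [e2]
  have h3 : 1 ≤ (1 / Real.log 2) ^ (2 * ν + 1) * (n * Real.log n ^ (2 * ν + 1)) := by
    have a : 1 ≤ (1 / Real.log 2 * Real.log n) ^ (2 * ν + 1) := one_le_pow₀ h1
    rw [mul_pow] at a
    calc (1:ℝ) ≤ n * ((1 / Real.log 2) ^ (2 * ν + 1) * Real.log n ^ (2 * ν + 1)) := by nlinarith
      _ = _ := by ring
  have h4 := mul_le_mul_of_nonneg_left hT hK1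
  rw [hE, add_mul]
  linarith

lemma urn_final_large {θ ρ D K K1 : ℝ} (hθ : 0 < θ) (hD : 0 < D) (hK : 0 ≤ K) (hK1 : 0 ≤ K1)
    (ν : ℕ) (hρ : 1 / 2 < ρ) : ∃ C : ℝ, 0 ≤ C ∧ ∀ n : ℕ, 2 ≤ n →
    Real.sqrt (1 + K1 * ∑ k ∈ Finset.range n, urnG θ ρ D K ν n k ^ 2)
      ≤ C * (n:ℝ) ^ ρ * Real.log n ^ ν := by
  obtain ⟨B, hB, hS⟩ := urn_final_log (ρ := ρ) hθ hD hK ν (by linarith)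
  have h2 : 0 < Real.log 2 := Real.log_pos (by norm_num)
  have hsum : Summable (fun k : ℕ => ((k:ℝ) + 1) ^ (-(2 * ρ))) := by
    have h := (Real.summable_nat_rpow (p := -(2 * ρ))).mpr (by linarith)
    have := (summable_nat_add_iff 1).mpr h
    simpa using this
  set Z := ∑' k : ℕ, ((k:ℝ) + 1) ^ (-(2 * ρ)) with hZ
  have hZ0 : 0 ≤ Z := tsum_nonneg fun k => by positivity
  set E := (1 / Real.log 2) ^ (2 * ν) + K1 * (B * Z) with hE
  have hEp : 0 < E := by positivity
  refine ⟨Real.sqrt E, Real.sqrt_nonneg _, fun n hn => ?_⟩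
  have hn' : (2:ℝ) ≤ n := by exact_mod_cast hn
  have hn0 : (0:ℝ) < n := by linarith
  have hlog : 0 < Real.log n := Real.log_pos (by linarith)
  have h1 : 1 ≤ 1 / Real.log 2 * Real.log n := urn_log_const hn 1 (by norm_num)
  have hH : ∑ k ∈ Finset.range n, ((k:ℝ) + 1) ^ (-(2 * ρ)) ≤ Z :=
    hsum.sum_le_tsum _ fun k _ => by positivity
  have hT : ∑ k ∈ Finset.range n, urnG θ ρ D K ν n k ^ 2 ≤
      B * Z * ((n:ℝ) ^ (2 * ρ) * Real.log n ^ (2 * ν)) := by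
    refine (hS n hn).trans ((mul_le_mul_of_nonneg_left hH (by positivity)).trans (le_of_eq ?_))
    ring
  rw [Real.sqrt_le_iff]
  refine ⟨by positivity, ?_⟩
  have e2 : (Real.sqrt E * (n:ℝ) ^ ρ * Real.log n ^ ν) ^ 2 =
      E * ((n:ℝ) ^ (2 * ρ) * Real.log n ^ (2 * ν)) := by
    rw [mul_pow, mul_pow, Real.sq_sqrt hEp.le,
      ← Real.rpow_natCast ((n:ℝ) ^ ρ) 2, ← Real.rpow_mul hn0.le]
    push_cast
    rw [mul_comm ρ]; ring
  rw [e2]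
  have h3 : 1 ≤ (1 / Real.log 2) ^ (2 * ν) * ((n:ℝ) ^ (2 * ρ) * Real.log n ^ (2 * ν)) := by
    have a : 1 ≤ (1 / Real.log 2 * Real.log n) ^ (2 * ν) := one_le_pow₀ h1
    have b : 1 ≤ (n:ℝ) ^ (2 * ρ) := Real.one_le_rpow (by linarith) (by linarith)
    rw [mul_pow] at a
    calc (1:ℝ) ≤ (n:ℝ) ^ (2 * ρ) * ((1 / Real.log 2) ^ (2 * ν) * Real.log n ^ (2 * ν)) := by
          nlinarith
      _ = _ := by ring
  have h4 := mul_le_mul_of_nonneg_left hT hK1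
  rw [hE, add_mul]
  linarith


lemma urn_scalar {p : ℝ} (hp : 2 ≤ p) : ∃ K : ℝ, 0 < K ∧ ∀ {Ω : Type} {m0 : MeasurableSpace Ω}
    (μ : Measure Ω) [IsProbabilityMeasure μ] (ℱ : Filtration ℕ m0) (q : ℕ)
    (ξ : ℕ → Ω → EuclideanSpace ℝ (Fin q)), (∀ k, StronglyMeasurable[ℱ (k + 1)] (ξ k)) →
    (∀ k, MemLp (ξ k) (ENNReal.ofReal p) μ) → (∀ k, μ[ξ k|ℱ k] =ᵐ[μ] 0) →
    ∀ (B : ℝ), 0 < B → (∀ k, eLpNorm (ξ k) (ENNReal.ofReal p) μ ≤ ENNReal.ofReal B) →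
    ∀ (n : ℕ) (e : ℕ → Fin q → ℝ) (g : ℕ → ℝ), (∀ k < n, 0 < g k) →
    (∀ k < n, ∀ j, |e k j| ≤ g k) →
    eLpNorm (fun ω => ∑ k ∈ Finset.range n, ∑ j, e k j * ξ k ω j) (ENNReal.ofReal p) μ
      ≤ ENNReal.ofReal (Real.sqrt (1 + K * ∑ k ∈ Finset.range n, (((q:ℝ) + 1) * B * g k) ^ 2)) := by
  obtain ⟨K, hK, hM⟩ := urn_mart hp
  refine ⟨K, hK, ?_⟩
  intro Ω m0 μ _ ℱ q ξ hξm hξL hξc B hB hξB n e g hg he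
  have hp1 : (1 : ENNReal) ≤ ENNReal.ofReal p := by
    rw [← ENNReal.ofReal_one]; exact ENNReal.ofReal_le_ofReal (by linarith)
  let L : ℕ → EuclideanSpace ℝ (Fin q) →L[ℝ] ℝ := fun k =>
    ∑ j, e k j • (EuclideanSpace.proj j : EuclideanSpace ℝ (Fin q) →L[ℝ] ℝ)
  have hL : ∀ k ω, L k (ξ k ω) = ∑ j, e k j * ξ k ω j := by
    intro k ω
    simp [L, ContinuousLinearMap.sum_apply]
  refine hM μ ℱ (fun k ω => ∑ j, e k j * ξ k ω j) ?_ ?_ ?_ n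
    (fun k => ((q:ℝ) + 1) * B * g k) ?_ ?_
  · intro k
    simp only [← hL]
    exact (L k).continuous.comp_stronglyMeasurable (hξm k)
  · intro k
    simp only [← hL]
    exact (L k).comp_memLp' (hξL k)
  · intro k
    simp only [← hL]
    have h := (L k).comp_condExp_comm (m := ℱ k) ((hξL k).integrable hp1)
    have h2 : (fun ω => L k (ξ k ω)) = L k ∘ ξ k := rfl
    filter_upwards [h, hξc k] with ω a b
    rw [h2, ← a]
    simp [b]
  · intro k hk
    have := hg k hk
    positivity
  · intro k hk
    have hgk := hg k hk
    have hpt : ∀ ω, ‖∑ j, e k j * ξ k ω j‖ ≤ (((q:ℝ) + 1) * g k) * ‖ξ k ω‖ := by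
      intro ω
      refine (norm_sum_le _ _).trans ?_
      have : ∀ j ∈ Finset.univ, ‖e k j * ξ k ω j‖ ≤ g k * ‖ξ k ω‖ := by
        intro j _
        rw [norm_mul, Real.norm_eq_abs]
        exact mul_le_mul (he k hk j) (PiLp.norm_apply_le _ j) (norm_nonneg _) hgk.le
      refine (Finset.sum_le_sum this).trans ?_
      rw [Finset.sum_const, Finset.card_univ, Fintype.card_fin, nsmul_eq_mul]
      nlinarith [mul_nonneg hgk.le (norm_nonneg (ξ k ω))]
    refine (eLpNorm_le_mul_eLpNorm_of_ae_le_mul (Eventually.of_forall hpt) _).trans ?_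
    refine (mul_le_mul_right (hξB k) _).trans ?_
    rw [← ENNReal.ofReal_mul (by positivity)]
    apply ENNReal.ofReal_le_ofReal
    apply le_of_eq; ring

lemma urn_vec_norm_le {q : ℕ} (v : Fin q → ℂ) :
    ‖(WithLp.equiv 2 (Fin q → ℂ)).symm v‖ ≤ ∑ i, (|(v i).re| + |(v i).im|) := by
  have e : (WithLp.equiv 2 (Fin q → ℂ)).symm v = ∑ i, EuclideanSpace.single i (v i) := by
    ext j
    simp [Finset.sum_apply, Pi.single_apply]
  rw [e]
  refine (norm_sum_le _ _).trans (Finset.sum_le_sum fun i _ => ?_)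
  rw [EuclideanSpace.norm_single]
  exact Complex.norm_le_abs_re_add_abs_im _

/-- deterministic coefficient bound for the projected propagator -/
lemma urn_PF_bound {q : ℕ} {A : Matrix (Fin q) (Fin q) ℂ} {lam : ℂ} {P : Matrix (Fin q) (Fin q) ℂ}
    (hP : IsSpectralProj A lam P) {ν : ℕ} (hν : NilIndexOf A lam P ν)
    {b w : ℝ} (hb : 0 < b) (hw : 0 < w) :
    ∃ D K : ℝ, 0 < D ∧ 0 ≤ K ∧ ∀ n k : ℕ, k < n → ∀ i j,
      ‖(P * urnF A (fun n : ℕ => (((w + n * b)⁻¹ : ℝ) : ℂ)) (k + 1) n) i j‖ ≤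
        urnG (w / b) (lam.re / b) D K ν n k := by
  obtain ⟨C, K, hC, hK, h⟩ := urn_coef lam hb hw
  set N := (A - lam • 1) * P with hN
  set D : ℝ := 1 + ∑ l ∈ Finset.range (ν + 1), ∑ i, ∑ j, ‖(N ^ l * P) i j‖ with hD
  have hDpos : 0 < D := by positivity
  refine ⟨D * C, K, by positivity, hK, fun n k hk i j => ?_⟩
  set β : ℕ → ℂ := fun n : ℕ => (((w + n * b)⁻¹ : ℝ) : ℂ) with hβ
  have hN0 : ∀ l, ν < l → N ^ l = 0 := by
    intro l hl
    exact pow_eq_zero_of_le hl hν.1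
  have := h D ν (k + 1) (fun l n => (N ^ l * P * urnF A β (k + 1) n) i j) hDpos.le ?_ ?_ ?_ n hk
  · simpa [urnG] using this
  · intro l n hn
    have := urnF_rec hP β (k + 1) n l hn
    rw [← hN] at this
    rw [this]
    simp [Matrix.add_apply, Matrix.smul_apply, hβ]
  · intro l hl n
    simp [hN0 l hl]
  · intro l
    rw [urnF_of_le _ _ _ _ le_rfl, mul_one]
    rcases lt_or_ge ν l with hl | hl
    · simp [hN0 l hl, hDpos.le]
    · have a1 : ‖(N ^ l * P) i j‖ ≤ ∑ j, ‖(N ^ l * P) i j‖ :=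
        Finset.single_le_sum (f := fun j => ‖(N ^ l * P) i j‖) (fun _ _ => norm_nonneg _)
          (Finset.mem_univ j)
      have a2 : ∑ j, ‖(N ^ l * P) i j‖ ≤ ∑ i, ∑ j, ‖(N ^ l * P) i j‖ :=
        Finset.single_le_sum (f := fun i => ∑ j, ‖(N ^ l * P) i j‖)
          (fun _ _ => Finset.sum_nonneg fun _ _ => norm_nonneg _) (Finset.mem_univ i)
      have a3 : ∑ i, ∑ j, ‖(N ^ l * P) i j‖ ≤
          ∑ l ∈ Finset.range (ν + 1), ∑ i, ∑ j, ‖(N ^ l * P) i j‖ :=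
        Finset.single_le_sum (f := fun l => ∑ i, ∑ j, ‖(N ^ l * P) i j‖)
          (fun _ _ => Finset.sum_nonneg fun _ _ => Finset.sum_nonneg fun _ _ => norm_nonneg _)
          (Finset.mem_range.mpr (by omega))
      rw [hD]; linarith

/-- Combined bound: the projected centred process in terms of `urnG`. -/
lemma urn_main_bound
    (q : ℕ) {Ω : Type} {m0 : MeasurableSpace Ω}
    (μ : Measure Ω) [IsProbabilityMeasure μ] (ℱ : Filtration ℕ m0)
    (b : ℝ) (hb : 0 < b) (w : ℝ) (hw : 0 < w)
    (A : Matrix (Fin q) (Fin q) ℝ)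
    (X : ℕ → Ω → EuclideanSpace ℝ (Fin q)) (hadp : Adapted ℱ X)
    (hXint : ∀ n, Integrable (X n) μ)
    (x₀ : EuclideanSpace ℝ (Fin q)) (hX0 : X 0 = fun _ => x₀)
    (hcond : ∀ n : ℕ, μ[fun ω => X (n + 1) ω - X n ω | ℱ n] =ᵐ[μ]
      fun ω => (w + (n : ℝ) * b)⁻¹ • (Matrix.toEuclideanCLM (𝕜 := ℝ) A (X n ω)))
    (p : ℝ) (hp : 2 ≤ p)
    (hmom : (⨆ n : ℕ, eLpNorm (fun ω => X (n + 1) ω - X n ω) (ENNReal.ofReal p) μ) < ⊤)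
    (lam : ℂ) (P : Matrix (Fin q) (Fin q) ℂ)
    (hP : IsSpectralProj (A.map (fun x : ℝ => (x : ℂ))) lam P)
    (ν : ℕ) (hν : NilIndexOf (A.map (fun x : ℝ => (x : ℂ))) lam P ν) :
    ∃ D K K1 : ℝ, 0 < D ∧ 0 ≤ K ∧ 0 ≤ K1 ∧ ∀ n : ℕ,
        eLpNorm (fun ω => (WithLp.equiv 2 (Fin q → ℂ)).symm
            (P.mulVec (fun j => ((X n ω j - (∫ ω', X n ω' ∂μ) j : ℝ) : ℂ))))
          (ENNReal.ofReal p) μ ≤ ENNReal.ofReal (2 * q * Real.sqrt (1 + K1 *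
            ∑ k ∈ Finset.range n, urnG (w / b) (lam.re / b) D K ν n k ^ 2)) := by
  obtain ⟨K1, hK1, hS⟩ := urn_scalar hp
  obtain ⟨D, K, hD, hK, hPF⟩ := urn_PF_bound hP hν hb hw
  have hp1 : (1 : ENNReal) ≤ ENNReal.ofReal p := by
    rw [← ENNReal.ofReal_one]; exact ENNReal.ofReal_le_ofReal (by linarith)
  set T : EuclideanSpace ℝ (Fin q) →L[ℝ] EuclideanSpace ℝ (Fin q) :=
    Matrix.toEuclideanCLM (𝕜 := ℝ) A with hT
  set AC := A.map (fun x : ℝ => (x : ℂ)) with hAC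
  set β : ℕ → ℝ := fun n => (w + (n:ℝ) * b)⁻¹ with hβ
  have hβ0 : ∀ n, 0 ≤ β n := fun n => by simp only [hβ]; positivity
  have hXm : ∀ n, StronglyMeasurable[ℱ n] (X n) := fun n => (hadp n).stronglyMeasurable
  let ξ : ℕ → Ω → EuclideanSpace ℝ (Fin q) := fun n ω => X (n + 1) ω - X n ω - β n • T (X n ω)
  -- moments
  set B0 := (⨆ n : ℕ, eLpNorm (fun ω => X (n + 1) ω - X n ω) (ENNReal.ofReal p) μ).toReal with hB0
  have hB00 : 0 ≤ B0 := ENNReal.toReal_nonneg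
  have hΔ : ∀ n, eLpNorm (fun ω => X (n + 1) ω - X n ω) (ENNReal.ofReal p) μ ≤ ENNReal.ofReal B0 := by
    intro n
    rw [hB0, ENNReal.ofReal_toReal hmom.ne]
    exact le_iSup (fun n => eLpNorm (fun ω => X (n + 1) ω - X n ω) (ENNReal.ofReal p) μ) n
  have hΔL : ∀ n, MemLp (fun ω => X (n + 1) ω - X n ω) (ENNReal.ofReal p) μ := fun n =>
    ⟨((hXint (n + 1)).sub (hXint n)).aestronglyMeasurable, (hΔ n).trans_lt ENNReal.ofReal_lt_top⟩
  have hXB : ∀ n : ℕ, eLpNorm (X n) (ENNReal.ofReal p) μ ≤ ENNReal.ofReal (‖x₀‖ + n * B0) := by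
    intro n
    induction n with
    | zero =>
      rw [hX0, eLpNorm_const _ (by simp; linarith) (IsProbabilityMeasure.ne_zero μ)]
      simp
    | succ n ih =>
      have e : X (n + 1) = X n + (fun ω => X (n + 1) ω - X n ω) := by
        funext ω; simp
      rw [e]
      refine (eLpNorm_add_le (hXint n).aestronglyMeasurable (hΔL n).1 hp1).trans ?_
      refine (add_le_add ih (hΔ n)).trans ?_
      rw [← ENNReal.ofReal_add (by positivity) hB00]
      apply ENNReal.ofReal_le_ofReal
      push_cast; linarith
  have hXL : ∀ n, MemLp (X n) (ENNReal.ofReal p) μ := fun n =>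
    ⟨(hXint n).aestronglyMeasurable, (hXB n).trans_lt ENNReal.ofReal_lt_top⟩
  have hTL : ∀ n, MemLp (fun ω => β n • T (X n ω)) (ENNReal.ofReal p) μ := fun n =>
    (T.comp_memLp' (hXL n)).const_smul (β n)
  have hξL : ∀ n, MemLp (ξ n) (ENNReal.ofReal p) μ := fun n => (hΔL n).sub (hTL n)
  set B := 1 + B0 + ‖T‖ * (‖x₀‖ / w + B0 / b) with hB
  have hBpos : 0 < B := by positivity
  have hξB : ∀ n, eLpNorm (ξ n) (ENNReal.ofReal p) μ ≤ ENNReal.ofReal B := by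
    intro n
    refine (eLpNorm_sub_le (hΔL n).1 (hTL n).1 hp1).trans ?_
    have h1 : eLpNorm (fun ω => β n • T (X n ω)) (ENNReal.ofReal p) μ ≤
        ENNReal.ofReal (‖T‖ * (‖x₀‖ / w + B0 / b)) := by
      have hpt : ∀ ω, ‖β n • T (X n ω)‖ ≤ (β n * ‖T‖) * ‖X n ω‖ := by
        intro ω
        rw [norm_smul, Real.norm_of_nonneg (hβ0 n), mul_assoc]
        exact mul_le_mul_of_nonneg_left (T.le_opNorm _) (hβ0 n)
      refine (eLpNorm_le_mul_eLpNorm_of_ae_le_mul (Eventually.of_forall hpt) _).trans ?_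
      refine (mul_le_mul_right (hXB n) _).trans ?_
      rw [← ENNReal.ofReal_mul (mul_nonneg (hβ0 n) (norm_nonneg _))]
      apply ENNReal.ofReal_le_ofReal
      have hn : (0:ℝ) ≤ n := Nat.cast_nonneg n
      have hβn : β n * (‖x₀‖ + n * B0) ≤ ‖x₀‖ / w + B0 / b := by
        have a1 : β n * ‖x₀‖ ≤ ‖x₀‖ / w := by
          rw [div_eq_inv_mul]
          apply mul_le_mul_of_nonneg_right _ (norm_nonneg _)
          exact inv_anti₀ hw (by nlinarith)
        have a2 : β n * (n * B0) ≤ B0 / b := by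
          simp only [hβ]
          rw [inv_mul_eq_div, div_le_div_iff₀ (by positivity) hb]
          nlinarith [mul_nonneg hB00 hw.le]
        rw [mul_add]; linarith
      calc β n * ‖T‖ * (‖x₀‖ + n * B0) = ‖T‖ * (β n * (‖x₀‖ + n * B0)) := by ring
        _ ≤ _ := by gcongr
    refine (add_le_add (hΔ n) h1).trans ?_
    rw [← ENNReal.ofReal_add hB00 (by positivity)]
    apply ENNReal.ofReal_le_ofReal
    rw [hB]; linarith
  -- measurability
  have hξm : ∀ k, StronglyMeasurable[ℱ (k + 1)] (ξ k) := by
    intro k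
    have h1 := (hXm k).mono (ℱ.mono (Nat.le_succ k))
    exact ((hXm (k + 1)).sub h1).sub ((T.continuous.comp_stronglyMeasurable h1).const_smul (β k))
  -- conditional centering
  have hξc : ∀ k, μ[ξ k|ℱ k] =ᵐ[μ] 0 := by
    intro k
    have hTi : Integrable (fun ω => β k • T (X k ω)) μ := (hTL k).integrable hp1
    have h1 : μ[ξ k|ℱ k] =ᵐ[μ] μ[fun ω => X (k + 1) ω - X k ω|ℱ k] -
        μ[fun ω => β k • T (X k ω)|ℱ k] :=
      condExp_sub ((hΔL k).integrable hp1) hTi (ℱ k)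
    have h2 : μ[fun ω => β k • T (X k ω)|ℱ k] = fun ω => β k • T (X k ω) :=
      condExp_of_stronglyMeasurable (ℱ.le k)
        ((T.continuous.comp_stronglyMeasurable (hXm k)).const_smul (β k)) hTi
    rw [h2] at h1
    filter_upwards [h1, hcond k] with ω a c
    rw [a, Pi.sub_apply, c]
    simp [hβ]
  have hξ0 : ∀ k, ∫ ω, ξ k ω ∂μ = 0 := by
    intro k
    rw [← integral_condExp (ℱ.le k), integral_congr_ae (hξc k)]
    simp
  -- mean recursion
  have hmean : ∀ k, ∫ ω, X (k + 1) ω ∂μ = ∫ ω, X k ω ∂μ + β k • T (∫ ω, X k ω ∂μ) := by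
    intro k
    have h := hξ0 k
    have hTi : Integrable (fun ω => β k • T (X k ω)) μ := (hTL k).integrable hp1
    have e : ∫ ω, ξ k ω ∂μ = ∫ ω, X (k + 1) ω ∂μ - ∫ ω, X k ω ∂μ - β k • T (∫ ω, X k ω ∂μ) := by
      simp only [ξ]
      rw [integral_sub ((hΔL k).integrable hp1) hTi, integral_sub (hXint _) (hXint _),
        integral_smul, T.integral_comp_comm (hXint k)]
    rw [e] at h
    rw [sub_sub, sub_eq_zero] at h
    exact h
  -- pointwise solution
  have hsol : ∀ n ω, (fun j => ((X n ω j - (∫ ω', X n ω' ∂μ) j : ℝ) : ℂ)) =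
      ∑ k ∈ Finset.range n, (urnF AC (fun n => (β n : ℂ)) (k + 1) n).mulVec
        (fun j => ((ξ k ω j : ℝ) : ℂ)) := by
    intro n ω
    refine urn_solve AC (fun n => (β n : ℂ))
      (fun n => (fun j => ((X n ω j - (∫ ω', X n ω' ∂μ) j : ℝ) : ℂ)))
      (fun k j => ((ξ k ω j : ℝ) : ℂ)) ?_ ?_ n
    · funext j
      simp [hX0]
    · intro n
      have hTj : ∀ v : EuclideanSpace ℝ (Fin q), ∀ j, T v j = ∑ l, A j l * v l := by
        intro v j
        rw [hT, Matrix.ofLp_toEuclideanCLM]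
        rfl
      funext j
      rw [hmean n, Matrix.add_mulVec, Matrix.one_mulVec, Matrix.smul_mulVec]
      simp only [ξ, Pi.add_apply, Pi.smul_apply, PiLp.sub_apply, PiLp.add_apply, PiLp.smul_apply,
        Matrix.mulVec, dotProduct, hTj, hAC, Matrix.map_apply, smul_eq_mul]
      push_cast
      simp only [mul_sub, Finset.sum_sub_distrib]
      ring
  refine ⟨((q:ℝ) + 1) * B * D, K, K1, by positivity, hK, hK1.le, fun n => ?_⟩
  set c : ℕ → Fin q → Fin q → ℂ := fun k i j =>
    (P * urnF AC (fun n => (β n : ℂ)) (k + 1) n) i j with hc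
  have hθ : 0 < w / b := by positivity
  have hcb : ∀ k < n, ∀ i j, ‖c k i j‖ ≤ urnG (w / b) (lam.re / b) D K ν n k :=
    fun k hk i j => hPF n k hk i j
  have hgp : ∀ k < n, 0 < urnG (w / b) (lam.re / b) D K ν n k :=
    fun k hk => urnG_nonneg hθ hD hK hk
  have hgD : ∀ k, ((q:ℝ) + 1) * B * urnG (w / b) (lam.re / b) D K ν n k =
      urnG (w / b) (lam.re / b) (((q:ℝ) + 1) * B * D) K ν n k := by
    intro k
    unfold urnG
    ring
  set S : ℝ := Real.sqrt (1 + K1 *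
    ∑ k ∈ Finset.range n, urnG (w / b) (lam.re / b) (((q:ℝ) + 1) * B * D) K ν n k ^ 2) with hSdef
  have hS0 : 0 ≤ S := Real.sqrt_nonneg _
  have hSe : ∀ e : ℕ → Fin q → ℝ,
      (∀ k < n, ∀ j, |e k j| ≤ urnG (w / b) (lam.re / b) D K ν n k) →
      eLpNorm (fun ω => ∑ k ∈ Finset.range n, ∑ j, e k j * ξ k ω j) (ENNReal.ofReal p) μ
        ≤ ENNReal.ofReal S := by
    intro e he
    have h := hS μ ℱ q ξ hξm hξL hξc B hBpos hξB n e
      (fun k => urnG (w / b) (lam.re / b) D K ν n k) hgp he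
    simp only [hgD] at h
    exact h
  let R : Fin q → Ω → ℝ := fun i ω => ∑ k ∈ Finset.range n, ∑ j, (c k i j).re * ξ k ω j
  let I : Fin q → Ω → ℝ := fun i ω => ∑ k ∈ Finset.range n, ∑ j, (c k i j).im * ξ k ω j
  have hmeas : ∀ e : ℕ → Fin q → ℝ, AEStronglyMeasurable
      (fun ω => ∑ k ∈ Finset.range n, ∑ j, e k j * ξ k ω j) μ := by
    intro e
    refine Finset.aestronglyMeasurable_fun_sum _ fun k _ =>
      Finset.aestronglyMeasurable_fun_sum _ fun j _ => ?_
    exact ((EuclideanSpace.proj j : EuclideanSpace ℝ (Fin q) →L[ℝ] ℝ).continuous.comp_aestronglyMeasurable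
      (hξL k).1).const_mul _
  have hsum : ∀ ω i, (P.mulVec (fun j => ((X n ω j - (∫ ω', X n ω' ∂μ) j : ℝ) : ℂ))) i =
      ∑ k ∈ Finset.range n, ∑ j, c k i j * ((ξ k ω j : ℝ) : ℂ) := by
    intro ω i
    rw [hsol n ω, Matrix.mulVec_sum, Finset.sum_apply]
    refine Finset.sum_congr rfl fun k _ => ?_
    rw [Matrix.mulVec_mulVec]
    rfl
  have hre : ∀ ω i, ((P.mulVec (fun j => ((X n ω j - (∫ ω', X n ω' ∂μ) j : ℝ) : ℂ))) i).re =
      R i ω := by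
    intro ω i
    rw [hsum, Complex.re_sum]
    refine Finset.sum_congr rfl fun k _ => ?_
    rw [Complex.re_sum]
    refine Finset.sum_congr rfl fun j _ => ?_
    rw [Complex.re_mul_ofReal]
  have him : ∀ ω i, ((P.mulVec (fun j => ((X n ω j - (∫ ω', X n ω' ∂μ) j : ℝ) : ℂ))) i).im =
      I i ω := by
    intro ω i
    rw [hsum, Complex.im_sum]
    refine Finset.sum_congr rfl fun k _ => ?_
    rw [Complex.im_sum]
    refine Finset.sum_congr rfl fun j _ => ?_
    rw [Complex.im_mul_ofReal]
  have hR : ∀ i, eLpNorm (fun ω => ‖R i ω‖) (ENNReal.ofReal p) μ ≤ ENNReal.ofReal S := by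
    intro i
    rw [eLpNorm_norm]
    exact hSe (fun k j => (c k i j).re)
      (fun k hk j => (Complex.abs_re_le_norm _).trans (hcb k hk i j))
  have hI : ∀ i, eLpNorm (fun ω => ‖I i ω‖) (ENNReal.ofReal p) μ ≤ ENNReal.ofReal S := by
    intro i
    rw [eLpNorm_norm]
    exact hSe (fun k j => (c k i j).im)
      (fun k hk j => (Complex.abs_im_le_norm _).trans (hcb k hk i j))
  have hRm : ∀ i, AEStronglyMeasurable (fun ω => ‖R i ω‖) μ := fun i => (hmeas _).norm
  have hIm : ∀ i, AEStronglyMeasurable (fun ω => ‖I i ω‖) μ := fun i => (hmeas _).norm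
  calc _ ≤ eLpNorm (∑ i, ((fun ω => ‖R i ω‖) + (fun ω => ‖I i ω‖))) (ENNReal.ofReal p) μ := by
        refine eLpNorm_mono_real fun ω => ?_
        refine (urn_vec_norm_le _).trans (le_of_eq ?_)
        simp only [hre, him, Finset.sum_apply, Pi.add_apply, Real.norm_eq_abs]
    _ ≤ ∑ i, eLpNorm ((fun ω => ‖R i ω‖) + (fun ω => ‖I i ω‖)) (ENNReal.ofReal p) μ :=
        eLpNorm_sum_le (fun i _ => (hRm i).add (hIm i)) hp1
    _ ≤ ∑ _i : Fin q, ENNReal.ofReal (2 * S) := by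
        refine Finset.sum_le_sum fun i _ => ?_
        refine (eLpNorm_add_le (hRm i) (hIm i) hp1).trans ?_
        refine (add_le_add (hR i) (hI i)).trans ?_
        rw [← ENNReal.ofReal_add hS0 hS0, two_mul]
    _ = ENNReal.ofReal (2 * q * S) := by
        rw [Finset.sum_const, Finset.card_univ, Fintype.card_fin, nsmul_eq_mul,
          ← ENNReal.ofReal_natCast, ← ENNReal.ofReal_mul (Nat.cast_nonneg q)]
        congr 1; ring


/-- Under the Pólya urn hypotheses, let p ≥ 2 and assume
sup_n ‖X_{n+1} − X_n‖_p < ∞. Then for every eigenvalue λ of (the complexification of) A,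
with spectral projection P_λ and nilpotency index ν_λ, there is a constant C (depending
on the data and p but not on n) such that for every n ≥ 2:
‖P_λ(X_n − E X_n)‖_p ≤ C n^{1/2}                      if Re λ < b/2;
‖P_λ(X_n − E X_n)‖_p ≤ C n^{1/2} (log n)^{ν_λ + 1/2}  if Re λ = b/2;
‖P_λ(X_n − E X_n)‖_p ≤ C n^{Re λ / b} (log n)^{ν_λ}   if Re λ > b/2. -/
theorem urn_spectralProj_centered_Lp_bound
    (q : ℕ) (hq : 2 ≤ q) {Ω : Type} {m0 : MeasurableSpace Ω}
    (μ : Measure Ω) [IsProbabilityMeasure μ] (ℱ : Filtration ℕ m0)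
    (a : Fin q → ℝ) (b : ℝ) (hb : 0 < b)
    (A : Matrix (Fin q) (Fin q) ℝ) (hA : Matrix.vecMul a A = b • a)
    (X : ℕ → Ω → EuclideanSpace ℝ (Fin q)) (hadp : Adapted ℱ X)
    (hXint : ∀ n, Integrable (X n) μ)
    (x₀ : EuclideanSpace ℝ (Fin q)) (hX0 : X 0 = fun _ => x₀)
    (hw₀ : 0 < ∑ j, a j * x₀ j)
    (hwn : ∀ n : ℕ, ∀ᵐ ω ∂μ, ∑ j, a j * X n ω j = (∑ j, a j * x₀ j) + (n : ℝ) * b)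
    (hcond : ∀ n : ℕ, μ[fun ω => X (n + 1) ω - X n ω | ℱ n] =ᵐ[μ]
      fun ω => ((∑ j, a j * x₀ j) + (n : ℝ) * b)⁻¹ • (Matrix.toEuclideanCLM (𝕜 := ℝ) A (X n ω)))
    (p : ℝ) (hp : 2 ≤ p)
    (hmom : (⨆ n : ℕ, eLpNorm (fun ω => X (n + 1) ω - X n ω) (ENNReal.ofReal p) μ) < ⊤)
    (lam : ℂ) (hlam : lam ∈ spectrum ℂ (A.map (fun x : ℝ => (x : ℂ))))
    (P : Matrix (Fin q) (Fin q) ℂ)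
    (hP : IsSpectralProj (A.map (fun x : ℝ => (x : ℂ))) lam P)
    (ν : ℕ) (hν : NilIndexOf (A.map (fun x : ℝ => (x : ℂ))) lam P ν) :
    ∃ C : ℝ, ∀ n : ℕ, 2 ≤ n →
      (lam.re < b / 2 →
        eLpNorm (fun ω => (WithLp.equiv 2 (Fin q → ℂ)).symm
            (P.mulVec (fun j => ((X n ω j - (∫ ω', X n ω' ∂μ) j : ℝ) : ℂ))))
          (ENNReal.ofReal p) μ ≤ ENNReal.ofReal (C * (n : ℝ) ^ (1 / 2 : ℝ))) ∧
      (lam.re = b / 2 →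
        eLpNorm (fun ω => (WithLp.equiv 2 (Fin q → ℂ)).symm
            (P.mulVec (fun j => ((X n ω j - (∫ ω', X n ω' ∂μ) j : ℝ) : ℂ))))
          (ENNReal.ofReal p) μ
          ≤ ENNReal.ofReal (C * (n : ℝ) ^ (1 / 2 : ℝ) * Real.log n ^ ((ν : ℝ) + 1 / 2))) ∧
      (b / 2 < lam.re →
        eLpNorm (fun ω => (WithLp.equiv 2 (Fin q → ℂ)).symm
            (P.mulVec (fun j => ((X n ω j - (∫ ω', X n ω' ∂μ) j : ℝ) : ℂ))))
          (ENNReal.ofReal p) μ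
          ≤ ENNReal.ofReal (C * (n : ℝ) ^ (lam.re / b) * Real.log n ^ ν)) := by
  obtain ⟨D, K, K1, hD, hK, hK1, h⟩ := urn_main_bound q μ ℱ b hb (∑ j, a j * x₀ j) hw₀ A X hadp
    hXint x₀ hX0 hcond p hp hmom lam P hP ν hν
  have hθ : 0 < (∑ j, a j * x₀ j) / b := div_pos hw₀ hb
  have hq0 : (0:ℝ) ≤ 2 * q := by positivity
  rcases lt_trichotomy lam.re (b / 2) with hl | hl | hl
  · obtain ⟨C, -, hC⟩ := urn_final_small hθ hD hK hK1 ν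
      (show lam.re / b < 1 / 2 by rw [div_lt_iff₀ hb]; linarith)
    refine ⟨2 * q * C, fun n hn => ⟨fun _ => ?_, fun h' => by linarith, fun h' => by linarith⟩⟩
    refine (h n).trans (ENNReal.ofReal_le_ofReal ?_)
    rw [mul_assoc _ C]
    exact mul_le_mul_of_nonneg_left (hC n hn) hq0
  · obtain ⟨C, -, hC⟩ := urn_final_crit hθ hD hK hK1 ν
    have hr : lam.re / b = 1 / 2 := by rw [hl]; field_simp
    refine ⟨2 * q * C, fun n hn => ⟨fun h' => by linarith, fun _ => ?_, fun h' => by linarith⟩⟩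
    refine (h n).trans (ENNReal.ofReal_le_ofReal ?_)
    rw [mul_assoc _ C, mul_assoc (2 * (q:ℝ)), hr]
    exact mul_le_mul_of_nonneg_left (hC n hn) hq0
  · obtain ⟨C, -, hC⟩ := urn_final_large hθ hD hK hK1 ν
      (show 1 / 2 < lam.re / b by rw [lt_div_iff₀ hb]; linarith)
    refine ⟨2 * q * C, fun n hn => ⟨fun h' => by linarith, fun h' => by linarith, fun _ => ?_⟩⟩
    refine (h n).trans (ENNReal.ofReal_le_ofReal ?_)
    rw [mul_assoc _ C, mul_assoc (2 * (q:ℝ))]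
    exact mul_le_mul_of_nonneg_left (hC n hn) hq0
end
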